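/- Let A = I and suppose the drift b satisfies: sup_{x,μ}|b(x,μ)|(1+|x|)^{−m} < ∞ for some m ≥ 1; |b(x,μ) − b(x,σ)| ≤ C·W₁(μ,σ) for all x and all μ, σ ∈ 𝒫_V(ℝ^d); and ⟨x − y, b(x,μ) − b(y,μ)⟩ ≤ −κ|x−y|² for all x, y and all μ, where 0 < C < κ. Assume V(x) ≥ (1+|x|)^{m+1}. Let μ ∈ 𝒫_V(ℝ^d) be a stationary solution of L_μ^*μ = 0 and let (μ_t)_{t≥0} ⊂ 𝒫_V(ℝ^d) solve the Cauchy problem ∂_tμ_t = L_{μ_t}^*μ_t with initial condition ν ∈ 𝒫_V(ℝ^d). Then W₁(μ_t, μ) ≤ e^{−(κ−C)t} W₁(ν, μ) for all t ≥ 0. -/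

import Mathlib

open MeasureTheory Real Set Filter Metric
open scoped Topology RealInnerProductSpace NNReal ENNReal

noncomputable section

abbrev Ed (d : ℕ) : Type := EuclideanSpace ℝ (Fin d)

variable {d : ℕ}

/-- Second-order partial derivative `∂_i ∂_j φ (x)`. -/
def hess2 (φ : Ed d → ℝ) (x : Ed d) (i j : Fin d) : ℝ :=
  iteratedFDeriv ℝ 2 φ x ![EuclideanSpace.single i 1, EuclideanSpace.single j 1]

/-- The Laplacian. -/
def lap (φ : Ed d → ℝ) (x : Ed d) : ℝ := ∑ i, hess2 φ x i i

/-- The Kolmogorov operator with unit diffusion: `L φ = Δφ + ⟨B, ∇φ⟩`. -/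
def LopI (B : Ed d → Ed d) (φ : Ed d → ℝ) (x : Ed d) : ℝ :=
  lap φ x + ⟪B x, gradient φ x⟫

/-- Membership in `𝒫_V(ℝ^d)`. -/
def memPV (V : Ed d → ℝ) (μ : Measure (Ed d)) : Prop :=
  IsProbabilityMeasure μ ∧ Integrable V μ

/-- `C_0^∞` test functions. -/
def IsTestFun (φ : Ed d → ℝ) : Prop :=
  ContDiff ℝ (⊤ : ℕ∞) φ ∧ HasCompactSupport φ

/-- The Kantorovich `1`-distance, defined by duality over `1`-Lipschitz
functions. -/
def kant (μ ν : Measure (Ed d)) : ℝ :=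
  ⨆ f : {f : Ed d → ℝ // LipschitzWith 1 f},
    (∫ x, f.1 x ∂μ - ∫ x, f.1 x ∂ν)

/-- Stationary solution of `L_μ^*μ = 0` (with `A = I`). -/
def IsStationarySolI (B : Ed d → Ed d) (μ : Measure (Ed d)) : Prop :=
  ∀ φ : Ed d → ℝ, IsTestFun φ → ∫ x, LopI B φ x ∂μ = 0

/-- Solution of the nonlinear Cauchy problem (with `A = I`). -/
def IsCauchySolI (b : Ed d → Measure (Ed d) → Ed d)
    (ν : Measure (Ed d)) (μ : ℝ → Measure (Ed d)) : Prop :=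
  μ 0 = ν ∧ ∀ φ : Ed d → ℝ, IsTestFun φ → ∀ t : ℝ, 0 ≤ t →
    ∫ x, φ x ∂(μ t) - ∫ x, φ x ∂ν
      = ∫ s in (0:ℝ)..t, ∫ x, LopI (fun y => b y (μ s)) φ x ∂(μ s)

open scoped Convolution in
/-- Mollification `∫ f (x - y) φ y dy` of `f` by the kernel `φ`. -/
def moll (φ f : Ed d → ℝ) : Ed d → ℝ := f ⋆[ContinuousLinearMap.mul ℝ ℝ, volume] φ

lemma moll_apply (φ f : Ed d → ℝ) (x : Ed d) : moll φ f x = ∫ y, f (x - y) * φ y := by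
  simp [moll, convolution_eq_swap]

lemma moll_apply' (φ f : Ed d → ℝ) (x : Ed d) : moll φ f x = ∫ y, f y * φ (x - y) := by
  simp [moll, convolution_def]

lemma IsTestFun.continuous {φ : Ed d → ℝ} (hφ : IsTestFun φ) : Continuous φ := hφ.1.continuous

lemma IsTestFun.fderiv_apply {φ : Ed d → ℝ} (hφ : IsTestFun φ) (v : Ed d) :
    IsTestFun (fun y => fderiv ℝ φ y v) := by
  refine ⟨?_, hφ.2.fderiv_apply ℝ v⟩
  exact (hφ.1.fderiv_right (m := (⊤ : ℕ∞)) (by simp)).clm_apply contDiff_const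

lemma hess2_eq {φ : Ed d → ℝ} (hφ : ContDiff ℝ (⊤ : ℕ∞) φ) (x : Ed d) (i j : Fin d) :
    hess2 φ x i j = fderiv ℝ (fun y => fderiv ℝ φ y (EuclideanSpace.single j 1)) x
      (EuclideanSpace.single i 1) := by
  have h1 : DifferentiableAt ℝ (fderiv ℝ φ) x :=
    ((hφ.fderiv_right (m := (⊤ : ℕ∞)) (by simp)).differentiable (by simp)) x
  rw [hess2, iteratedFDeriv_two_apply, fderiv_clm_apply h1 (differentiableAt_const _)]
  simp

lemma IsTestFun.hess2 {φ : Ed d → ℝ} (hφ : IsTestFun φ) (i j : Fin d) :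
    IsTestFun (fun y => hess2 φ y i j) := by
  simp_rw [hess2_eq hφ.1]
  exact (hφ.fderiv_apply _).fderiv_apply _

lemma IsTestFun.sum {ι : Type*} (s : Finset ι) {φ : ι → Ed d → ℝ} (hφ : ∀ i, IsTestFun (φ i)) :
    IsTestFun (fun y => ∑ i ∈ s, φ i y) := by
  refine ⟨ContDiff.sum fun i _ => (hφ i).1, ?_⟩
  classical
  induction s using Finset.induction_on with
  | empty => simpa using! HasCompactSupport.zero
  | insert a s ha ih => simpa [Finset.sum_insert ha] using! (hφ a).2.add ih

lemma IsTestFun.lap {φ : Ed d → ℝ} (hφ : IsTestFun φ) : IsTestFun (lap φ) :=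
  IsTestFun.sum Finset.univ fun i => hφ.hess2 i i

lemma IsTestFun.add {φ ψ : Ed d → ℝ} (hφ : IsTestFun φ) (hψ : IsTestFun ψ) :
    IsTestFun (φ + ψ) := ⟨hφ.1.add hψ.1, hφ.2.add hψ.2⟩

lemma IsTestFun.integrable {φ : Ed d → ℝ} (hφ : IsTestFun φ) (μ : Measure (Ed d))
    [IsFiniteMeasureOnCompacts μ] : Integrable φ μ :=
  hφ.continuous.integrable_of_hasCompactSupport hφ.2

lemma IsTestFun.bounded {φ : Ed d → ℝ} (hφ : IsTestFun φ) : ∃ c, 0 ≤ c ∧ ∀ x, |φ x| ≤ c := by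
  obtain ⟨c, hc⟩ := hφ.2.exists_bound_of_continuous hφ.continuous
  exact ⟨c, (norm_nonneg _).trans (hc 0), hc⟩

lemma moll_integrable {φ f : Ed d → ℝ} (hφ : IsTestFun φ) (hf : Continuous f) (x : Ed d) :
    Integrable (fun y => f (x - y) * φ y) := by
  refine Continuous.integrable_of_hasCompactSupport ?_ hφ.2.mul_left
  exact (hf.comp (by fun_prop)).mul hφ.continuous

lemma moll_contDiff {φ f : Ed d → ℝ} (hφ : IsTestFun φ) (hf : Continuous f) :
    ContDiff ℝ (⊤ : ℕ∞) (moll φ f) :=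
  hφ.2.contDiff_convolution_right _ hf.locallyIntegrable hφ.1

lemma moll_isTestFun {φ f : Ed d → ℝ} (hφ : IsTestFun φ) (hf : Continuous f)
    (hc : HasCompactSupport f) : IsTestFun (moll φ f) :=
  ⟨moll_contDiff hφ hf, hc.convolution _ hφ.2⟩

lemma moll_fderiv {φ f : Ed d → ℝ} (hφ : IsTestFun φ) (hf : Continuous f) (x v : Ed d) :
    fderiv ℝ (moll φ f) x v = moll (fun y => fderiv ℝ φ y v) f x := by
  have h := hφ.2.hasFDerivAt_convolution_right (ContinuousLinearMap.mul ℝ ℝ)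
    hf.locallyIntegrable (μ := volume) (hφ.1.of_le (by simp)) x
  rw [moll, h.fderiv, convolution_precompR_apply _ hf.locallyIntegrable (hφ.2.fderiv ℝ)
    (hφ.1.continuous_fderiv (by simp))]
  rfl

lemma moll_hess2 {φ f : Ed d → ℝ} (hφ : IsTestFun φ) (hf : Continuous f) (x : Ed d)
    (i j : Fin d) : hess2 (moll φ f) x i j = moll (fun y => hess2 φ y i j) f x := by
  rw [hess2_eq (moll_contDiff hφ hf)]
  simp_rw [moll_fderiv hφ hf, hess2_eq hφ.1]
  rw [moll_fderiv (hφ.fderiv_apply _) hf]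

lemma moll_lipschitz {φ f : Ed d → ℝ} (hφ : IsTestFun φ) {K : ℝ≥0} (hf : LipschitzWith K f)
    (x y : Ed d) : |moll φ f x - moll φ f y| ≤ (∫ z, |φ z|) * K * ‖x - y‖ := by
  rw [moll_apply, moll_apply, ← integral_sub (moll_integrable hφ hf.continuous x)
    (moll_integrable hφ hf.continuous y), ← Real.norm_eq_abs]
  rw [mul_assoc, ← integral_mul_const]
  refine norm_integral_le_of_norm_le ((hφ.integrable volume).abs.mul_const _) ?_
  refine Eventually.of_forall fun z => ?_
  rw [← sub_mul, norm_mul, mul_comm, Real.norm_eq_abs (φ z)]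
  gcongr
  have := hf.dist_le_mul (x - z) (y - z)
  rwa [dist_sub_right, dist_eq_norm, dist_eq_norm] at this

/-- A smooth cutoff between a compact set and an open neighbourhood. -/
lemma exists_testFun_cutoff {K U : Set (Ed d)} (hK : IsCompact K) (hU : IsOpen U) (hKU : K ⊆ U) :
    ∃ g : Ed d → ℝ, IsTestFun g ∧ (∀ x, 0 ≤ g x) ∧ (∀ x, g x ≤ 1) ∧ (∀ x ∈ K, g x = 1) ∧
      ∀ x, x ∉ U → g x = 0 := by
  obtain ⟨R, hR⟩ := hK.isBounded.subset_ball (0 : Ed d)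
  have hdis : Disjoint (U ∩ ball 0 R)ᶜ K := by
    rw [Set.disjoint_left]
    exact fun x hx hxK => hx ⟨hKU hxK, hR hxK⟩
  obtain ⟨f, hf0, hf1, hf⟩ := exists_contMDiffMap_zero_one_of_isClosed (n := (⊤ : ℕ∞))
    (modelWithCornersSelf ℝ (Ed d)) (hU.inter isOpen_ball).isClosed_compl hK.isClosed hdis
  refine ⟨f, ⟨f.contMDiff.contDiff, ?_⟩, fun x => (hf x).1, fun x => (hf x).2, hf1, ?_⟩
  · refine HasCompactSupport.of_support_subset_isCompact (isCompact_closedBall (0 : Ed d) R) ?_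
    intro x hx
    by_contra h
    exact hx (hf0 (show x ∈ (U ∩ ball 0 R)ᶜ from fun h' => h (ball_subset_closedBall h'.2)))
  · exact fun x hx => hf0 (show x ∈ (U ∩ ball 0 R)ᶜ from fun h' => hx h'.1)

lemma LopI_eq (B : Ed d → Ed d) {φ : Ed d → ℝ} (x : Ed d) :
    LopI B φ x = lap φ x + fderiv ℝ φ x (B x) := by
  rw [LopI, gradient, real_inner_comm, InnerProductSpace.toDual_symm_apply]

lemma exists_resolvent {a : Ed d → Ed d} (ha : ContDiff ℝ 1 a)
    (hmono : ∀ x y, 0 ≤ ⟪x - y, a x - a y⟫) {r : ℝ} (hr : 0 < r) :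
    ∃ J : Ed d → Ed d, ∀ x, J x + r • a (J x) = x := by
  set F : Ed d → Ed d := fun x => x + r • a x with hF
  have hFc : ContDiff ℝ 1 F := by fun_prop
  have hexp : ∀ x y, ‖x - y‖ ≤ ‖F x - F y‖ := by
    intro x y
    have h1 : ‖x - y‖ ^ 2 ≤ ⟪x - y, F x - F y⟫ := by
      have : F x - F y = (x - y) + r • (a x - a y) := by simp only [hF]; module
      rw [this, inner_add_right, real_inner_self_eq_norm_sq, inner_smul_right]
      nlinarith [mul_nonneg hr.le (hmono x y)]
    have h2 := (real_inner_le_norm (x - y) (F x - F y))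
    by_contra! hlt
    nlinarith [norm_nonneg (x - y), norm_nonneg (F x - F y)]
  have hanti : AntilipschitzWith 1 F :=
    AntilipschitzWith.of_le_mul_dist fun x y => by
      simpa [dist_eq_norm] using hexp x y
  have hclosed : IsClosed (range F) := by
    refine (isProperMap_iff_tendsto_cocompact.2 ⟨hFc.continuous, ?_⟩).isClosedMap.isClosed_range
    rw [← cobounded_eq_cocompact]
    exact hanti.tendsto_cobounded
  have hopen : IsOpen (range F) := by
    rw [isOpen_iff_mem_nhds]
    rintro _ ⟨x, rfl⟩
    have hs : HasStrictFDerivAt F (fderiv ℝ F x) x := hFc.contDiffAt.hasStrictFDerivAt (by simp)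
    have hinj : Function.Injective (fderiv ℝ F x) := by
      rw [injective_iff_map_eq_zero]
      intro v hv
      have h1 : Tendsto (fun t : ℝ => ‖t⁻¹ • (F (x + t • v) - F x)‖) (𝓝[≠] 0)
          (𝓝 ‖fderiv ℝ F x v‖) := by
        have := (hs.hasFDerivAt.hasLineDerivAt v).tendsto_slope_zero
        exact this.norm
      have h2 : ∀ᶠ t : ℝ in 𝓝[≠] 0, ‖v‖ ≤ ‖t⁻¹ • (F (x + t • v) - F x)‖ := by
        filter_upwards [self_mem_nhdsWithin] with t ht
        have h3 := hexp (x + t • v) x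
        rw [add_sub_cancel_left, norm_smul] at h3
        rw [norm_smul, norm_inv]
        have ht' : 0 < ‖t‖ := norm_pos_iff.2 ht
        rw [inv_mul_eq_div, le_div_iff₀ ht']
        linarith
      have := ge_of_tendsto h1 h2
      rw [hv, norm_zero] at this
      exact norm_le_zero_iff.1 this
    have hsurj : Function.Surjective (fderiv ℝ F x) :=
      LinearMap.injective_iff_surjective.1 hinj
    rw [← hs.map_nhds_eq_of_surj (LinearMap.range_eq_top.2 hsurj)]
    exact Filter.mem_of_superset (image_mem_map univ_mem) (by simp)
  have huniv : range F = univ := IsClopen.eq_univ ⟨hclosed, hopen⟩ (range_nonempty F)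
  have : Function.Surjective F := range_eq_univ.1 huniv
  exact ⟨Function.surjInv this, Function.surjInv_eq this⟩

/-- A `C¹` monotone map has, through its Yosida regularizations, a sequence of Lipschitz monotone
maps converging to it pointwise and dominated by it. -/
lemma exists_yosida_seq {a : Ed d → Ed d} (ha : ContDiff ℝ 1 a)
    (hmono : ∀ x y, 0 ≤ ⟪x - y, a x - a y⟫) :
    ∃ A : ℕ → Ed d → Ed d, (∀ n, ∃ K : ℝ≥0, LipschitzWith K (A n)) ∧
      (∀ n x y, 0 ≤ ⟪x - y, A n x - A n y⟫) ∧ (∀ n x, ‖A n x‖ ≤ ‖a x‖) ∧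
      ∀ x, Tendsto (fun n => A n x) atTop (𝓝 (a x)) := by
  have hr : ∀ n : ℕ, (0 : ℝ) < 1 / ((n : ℝ) + 1) := fun n => by positivity
  choose J hJ using fun n : ℕ => exists_resolvent ha hmono (hr n)
  have key : ∀ (n : ℕ) x y, (1 / ((n : ℝ) + 1)) * ‖a (J n x) - a (J n y)‖ ^ 2 ≤
      ⟪x - y, a (J n x) - a (J n y)⟫ := by
    intro n x y
    have h : x - y = (J n x - J n y) + (1 / ((n : ℝ) + 1)) • (a (J n x) - a (J n y)) := by
      conv_lhs => rw [← hJ n x, ← hJ n y]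
      module
    rw [h, inner_add_left, inner_smul_left, real_inner_self_eq_norm_sq]
    have := hmono (J n x) (J n y)
    simp only [conj_trivial]
    linarith
  have hle : ∀ n x, ‖a (J n x)‖ ≤ ‖a x‖ := by
    intro n x
    have h1 := hmono x (J n x)
    have h2 : x - J n x = (1 / ((n : ℝ) + 1)) • a (J n x) := by
      conv_lhs => rw [← hJ n x]
      rw [hJ n x]; conv_lhs => enter [1]; rw [← hJ n x]
      abel
    rw [h2, inner_smul_left, inner_sub_right, real_inner_self_eq_norm_sq] at h1
    simp only [conj_trivial] at h1
    have h3 := nonneg_of_mul_nonneg_right h1 (hr n)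
    have h4 := real_inner_le_norm (a (J n x)) (a x)
    by_contra! hlt
    nlinarith [norm_nonneg (a x)]
  refine ⟨fun n x => a (J n x), fun n => ⟨⟨(n : ℝ) + 1, by positivity⟩, ?_⟩, ?_, hle, ?_⟩
  · refine LipschitzWith.of_dist_le_mul fun x y => ?_
    rw [dist_eq_norm, dist_eq_norm]
    have h1 := key n x y
    have h2 := real_inner_le_norm (x - y) (a (J n x) - a (J n y))
    change _ ≤ ((n : ℝ) + 1) * _
    by_contra! hlt
    have hpos : 0 < ‖a (J n x) - a (J n y)‖ := lt_of_le_of_lt (by positivity) hlt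
    have h3 : ‖a (J n x) - a (J n y)‖ ^ 2 ≤
        ((n : ℝ) + 1) * (‖x - y‖ * ‖a (J n x) - a (J n y)‖) := by
      rw [← div_le_iff₀' (by positivity), div_eq_inv_mul, ← one_div]
      linarith
    nlinarith
  · intro n x y
    exact (mul_nonneg (hr n).le (sq_nonneg _)).trans (key n x y)
  · intro x
    refine (ha.continuous.tendsto x).comp ?_
    rw [tendsto_iff_norm_sub_tendsto_zero]
    refine squeeze_zero (g := fun n : ℕ => (1 / ((n : ℝ) + 1)) * ‖a x‖)
      (fun _ => norm_nonneg _) (fun n => ?_) ?_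
    · have : J n x - x = - ((1 / ((n : ℝ) + 1)) • a (J n x)) := by
        conv_lhs => enter [2]; rw [← hJ n x]
        abel
      rw [this, norm_neg, norm_smul, Real.norm_of_nonneg (hr n).le]
      exact mul_le_mul_of_nonneg_left (hle n x) (hr n).le
    · simpa using tendsto_one_div_add_atTop_nhds_zero_nat.mul_const ‖a x‖

lemma continuous_one_add_norm_rpow (p : ℝ) : Continuous fun x : Ed d => (1 + ‖x‖) ^ p :=
  (continuous_const.add continuous_norm).rpow_const fun x => Or.inl
    (by linarith [norm_nonneg x] : (0 : ℝ) < 1 + ‖x‖).ne'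

lemma exists_lipschitz_approx_of_contDiff {M : Measure (Ed d)} {m κ c : ℝ} (hm : 1 ≤ m)
    (hM : Integrable (fun x => (1 + ‖x‖) ^ m) M) {β : Ed d → Ed d} (hβ : ContDiff ℝ 1 β)
    (hgrow : ∀ x, ‖β x‖ ≤ c * (1 + ‖x‖) ^ m)
    (hdiss : ∀ x y, ⟪x - y, β x - β y⟫ ≤ -κ * ‖x - y‖ ^ 2) {η : ℝ} (hη : 0 < η) :
    ∃ (B : Ed d → Ed d) (K : ℝ≥0), LipschitzWith K B ∧
      (∀ x y, ⟪x - y, B x - B y⟫ ≤ -κ * ‖x - y‖ ^ 2) ∧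
      Integrable (fun x => ‖β x - B x‖) M ∧ ∫ x, ‖β x - B x‖ ∂M ≤ η := by
  set a : Ed d → Ed d := fun x => -β x - κ • x with hadef
  have ha : ContDiff ℝ 1 a := by fun_prop
  have hamono : ∀ x y, 0 ≤ ⟪x - y, a x - a y⟫ := by
    intro x y
    have : a x - a y = -(β x - β y) - κ • (x - y) := by simp only [hadef]; module
    rw [this, inner_sub_right, inner_neg_right, inner_smul_right, real_inner_self_eq_norm_sq]
    linarith [hdiss x y]
  obtain ⟨A, hAL, hAm, hAb, hAt⟩ := exists_yosida_seq ha hamono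
  have hdiff : ∀ n x, β x - (-A n x - κ • x) = A n x - a x := by
    intro n x; simp only [hadef]; module
  have hLip : ∀ n, ∃ K : ℝ≥0, LipschitzWith K (fun x => -A n x - κ • x) := by
    intro n
    obtain ⟨K, hK⟩ := hAL n
    exact ⟨_, hK.neg.sub ((lipschitzWith_smul κ).comp LipschitzWith.id)⟩
  have hapow : ∀ x : Ed d, ‖a x‖ ≤ (c + |κ|) * (1 + ‖x‖) ^ m := by
    intro x
    have h1 : ‖x‖ ≤ (1 + ‖x‖) ^ m :=
      le_trans (by linarith) (Real.self_le_rpow_of_one_le (by linarith [norm_nonneg x]) hm)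
    calc ‖a x‖ ≤ ‖β x‖ + |κ| * ‖x‖ := by
          refine (norm_sub_le _ _).trans ?_
          rw [norm_neg, norm_smul, Real.norm_eq_abs]
      _ ≤ c * (1 + ‖x‖) ^ m + |κ| * (1 + ‖x‖) ^ m := by gcongr; exact hgrow x
      _ = _ := by ring
  have hmeas : ∀ n, AEStronglyMeasurable (fun x => ‖β x - (-A n x - κ • x)‖) M := by
    intro n
    obtain ⟨K, hK⟩ := hLip n
    exact (hβ.continuous.sub hK.continuous).norm.aestronglyMeasurable
  have hbound : ∀ n x, ‖‖β x - (-A n x - κ • x)‖‖ ≤ 2 * ((c + |κ|) * (1 + ‖x‖) ^ m) := by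
    intro n x
    rw [norm_norm, hdiff]
    linarith [norm_sub_le (A n x) (a x), hAb n x, hapow x]
  have hInt : Integrable (fun x : Ed d => 2 * ((c + |κ|) * (1 + ‖x‖) ^ m)) M :=
    (hM.const_mul _).const_mul _
  have hlim : Tendsto (fun n => ∫ x, ‖β x - (-A n x - κ • x)‖ ∂M) atTop (𝓝 (∫ _, (0 : ℝ) ∂M)) := by
    refine tendsto_integral_of_dominated_convergence _ hmeas hInt
      (fun n => Eventually.of_forall (hbound n)) (Eventually.of_forall fun x => ?_)
    simp_rw [hdiff]
    simpa using ((hAt x).sub_const (a x)).norm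
  rw [integral_zero] at hlim
  obtain ⟨n, hn⟩ := (hlim.eventually (eventually_le_nhds hη)).exists
  obtain ⟨K, hK⟩ := hLip n
  refine ⟨_, K, hK, fun x y => ?_, hInt.mono' (hmeas n) (Eventually.of_forall (hbound n)), hn⟩
  have : (-A n x - κ • x) - (-A n y - κ • y) = -(A n x - A n y) - κ • (x - y) := by module
  rw [this, inner_sub_right, inner_neg_right, inner_smul_right, real_inner_self_eq_norm_sq]
  linarith [hAm n x y]

/-- The standard smooth bump of outer radius `ε` at the origin. -/
def stdBump (d : ℕ) (ε : ℝ) (hε : 0 < ε) : ContDiffBump (0 : Ed d) :=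
  ⟨ε / 2, ε, by positivity, by linarith⟩

lemma one_add_norm_sub_rpow_le {m : ℝ} (hm : 0 ≤ m) (x y : Ed d) (hy : ‖y‖ ≤ 1) :
    (1 + ‖x - y‖) ^ m ≤ 2 ^ m * (1 + ‖x‖) ^ m := by
  rw [← Real.mul_rpow (by norm_num) (by linarith [norm_nonneg x])]
  refine Real.rpow_le_rpow (by linarith [norm_nonneg (x - y)]) ?_ hm
  linarith [norm_sub_le x y, norm_nonneg x]

open scoped Convolution in
open ContinuousLinearMap in
lemma exists_lipschitz_approx {M : Measure (Ed d)} (hac : M ≪ volume) {m κ c : ℝ} (hm : 1 ≤ m)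
    (hM : Integrable (fun x => (1 + ‖x‖) ^ m) M) {β : Ed d → Ed d} (hβ : Measurable β)
    (hgrow : ∀ x, ‖β x‖ ≤ c * (1 + ‖x‖) ^ m)
    (hdiss : ∀ x y, ⟪x - y, β x - β y⟫ ≤ -κ * ‖x - y‖ ^ 2) {η : ℝ} (hη : 0 < η) :
    ∃ (B : Ed d → Ed d) (K : ℝ≥0), LipschitzWith K B ∧
      (∀ x y, ⟪x - y, B x - B y⟫ ≤ -κ * ‖x - y‖ ^ 2) ∧
      Integrable (fun x => ‖β x - B x‖) M ∧ ∫ x, ‖β x - B x‖ ∂M ≤ η := by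
  have hc : 0 ≤ c := by simpa using (norm_nonneg _).trans (hgrow 0)
  have hloc : LocallyIntegrable β volume := by
    refine ((continuous_const.mul (continuous_one_add_norm_rpow m)).locallyIntegrable
      (f := fun x : Ed d => c * (1 + ‖x‖) ^ m)).mono hβ.aestronglyMeasurable ?_
    exact Eventually.of_forall fun x => (hgrow x).trans (le_abs_self _)
  have hεpos : ∀ n : ℕ, (0 : ℝ) < 1 / ((n : ℝ) + 1) := fun n => by positivity
  set φ : ℕ → ContDiffBump (0 : Ed d) := fun n => stdBump d _ (hεpos n) with hφ
  set βn : ℕ → Ed d → Ed d := fun n => (φ n).normed volume ⋆[lsmul ℝ ℝ, volume] β with hβn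
  have hae : ∀ᵐ x ∂M, Tendsto (fun n => βn n x) atTop (𝓝 (β x)) := by
    refine hac.ae_le (ContDiffBump.ae_convolution_tendsto_right_of_locallyIntegrable (K := 2)
      (tendsto_one_div_add_atTop_nhds_zero_nat) (Eventually.of_forall fun n => ?_) hloc)
    change 1 / ((n : ℝ) + 1) ≤ 2 * (1 / ((n : ℝ) + 1) / 2)
    linarith
  have hsmooth : ∀ n, ContDiff ℝ 1 (βn n) := fun n =>
    (φ n).hasCompactSupport_normed.contDiff_convolution_left _ (φ n).contDiff_normed hloc
  have hInt : ∀ n x, Integrable (fun y => (φ n).normed volume y • β (x - y)) := fun n x =>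
    (φ n).hasCompactSupport_normed.convolutionExists_left (lsmul ℝ ℝ)
      (φ n).continuous_normed hloc x
  have hval : ∀ n x, βn n x = ∫ y, (φ n).normed volume y • β (x - y) := fun n x => rfl
  have hgrown : ∀ n x, ‖βn n x‖ ≤ (c * 2 ^ m) * (1 + ‖x‖) ^ m := by
    intro n x
    rw [hval]
    have h1 : ∀ y, ‖(φ n).normed volume y • β (x - y)‖ ≤
        (φ n).normed volume y * ((c * 2 ^ m) * (1 + ‖x‖) ^ m) := by
      intro y
      rw [norm_smul, Real.norm_of_nonneg ((φ n).nonneg_normed y)]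
      by_cases hy : ‖y‖ ≤ 1
      · refine mul_le_mul_of_nonneg_left ?_ ((φ n).nonneg_normed y)
        refine (hgrow _).trans ?_
        rw [mul_assoc]
        exact mul_le_mul_of_nonneg_left (one_add_norm_sub_rpow_le (by linarith) x y hy) hc
      · have h0 : (φ n).normed volume y = 0 := by
          rw [← Function.notMem_support, (φ n).support_normed_eq, mem_ball_zero_iff, not_lt]
          change 1 / ((n : ℝ) + 1) ≤ ‖y‖
          have : 1 / ((n : ℝ) + 1) ≤ 1 := by
            rw [div_le_one (by positivity)]; linarith [n.cast_nonneg (α := ℝ)]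
          linarith
        simp [h0]
    refine (norm_integral_le_of_norm_le
      ((φ n).integrable_normed.mul_const _) (Eventually.of_forall h1)).trans ?_
    rw [integral_mul_const, (φ n).integral_normed, one_mul]
  have hdissn : ∀ n x y, ⟪x - y, βn n x - βn n y⟫ ≤ -κ * ‖x - y‖ ^ 2 := by
    intro n x y
    have hi : Integrable (fun a => (φ n).normed volume a • β (x - a) -
        (φ n).normed volume a • β (y - a)) := (hInt n x).sub (hInt n y)
    rw [hval, hval, ← integral_sub (hInt n x) (hInt n y), ← integral_inner hi]
    have h2 : -κ * ‖x - y‖ ^ 2 = ∫ z, (φ n).normed volume z * (-κ * ‖x - y‖ ^ 2) := by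
      rw [integral_mul_const, (φ n).integral_normed, one_mul]
    rw [h2]
    refine integral_mono (hi.const_inner _)
      ((φ n).integrable_normed.mul_const _) fun z => ?_
    have h3 := hdiss (x - z) (y - z)
    rw [sub_sub_sub_cancel_right] at h3
    beta_reduce
    rw [← smul_sub, inner_smul_right]
    exact mul_le_mul_of_nonneg_left h3 ((φ n).nonneg_normed z)
  have hmeas : ∀ n, AEStronglyMeasurable (fun x => ‖β x - βn n x‖) M := fun n =>
    (hβ.aestronglyMeasurable.sub (hsmooth n).continuous.aestronglyMeasurable).norm
  have hbound : ∀ n x, ‖‖β x - βn n x‖‖ ≤ (c + c * 2 ^ m) * (1 + ‖x‖) ^ m := by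
    intro n x
    rw [norm_norm, add_mul]
    exact (norm_sub_le _ _).trans (add_le_add (hgrow x) (hgrown n x))
  have hlim : Tendsto (fun n => ∫ x, ‖β x - βn n x‖ ∂M) atTop (𝓝 (∫ _, (0 : ℝ) ∂M)) := by
    refine tendsto_integral_of_dominated_convergence _ hmeas (hM.const_mul _)
      (fun n => Eventually.of_forall (hbound n)) (hae.mono fun x hx => ?_)
    simpa using (hx.const_sub (β x)).norm
  rw [integral_zero] at hlim
  obtain ⟨n, hn⟩ := (hlim.eventually (eventually_le_nhds (half_pos hη))).exists
  obtain ⟨B, K, hBK, hBd, hBi, hB⟩ := exists_lipschitz_approx_of_contDiff hm hM (hsmooth n)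
    (hgrown n) (hdissn n) (half_pos hη)
  have hi1 : Integrable (fun x => ‖β x - βn n x‖) M :=
    (hM.const_mul _).mono' (hmeas n) (Eventually.of_forall (hbound n))
  have htri : ∀ x, ‖β x - B x‖ ≤ ‖β x - βn n x‖ + ‖βn n x - B x‖ := fun x =>
    norm_sub_le_norm_sub_add_norm_sub _ _ _
  have hi : Integrable (fun x => ‖β x - B x‖) M :=
    (hi1.add hBi).mono' (hβ.aestronglyMeasurable.sub
      hBK.continuous.aestronglyMeasurable).norm
      (Eventually.of_forall fun x => by rw [norm_norm]; exact htri x)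
  refine ⟨B, K, hBK, hBd, hi, (integral_mono hi (hi1.add hBi) htri).trans ?_⟩
  rw [integral_add' hi1 hBi]
  linarith

lemma contDiff_deriv_expNegInvGlue : ContDiff ℝ (⊤ : ℕ∞) (deriv expNegInvGlue) := by
  have h : ContDiff ℝ (⊤ : ℕ∞) expNegInvGlue := expNegInvGlue.contDiff
  exact (contDiff_infty_iff_deriv.1 h).2

lemma hasFDerivAt_radial {P : ℝ → ℝ} {P' : ℝ} (y : Ed d) (hP : HasDerivAt P P' (‖y‖ ^ 2)) :
    HasFDerivAt (fun z : Ed d => P (‖z‖ ^ 2)) ((2 * P') • innerSL ℝ y) y := by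
  have h1 := (hasStrictFDerivAt_norm_sq y).hasFDerivAt
  have h2 := hP.comp_hasFDerivAt y h1
  refine h2.congr_fderiv ?_
  ext v
  simp
  ring

/-- A smooth compactly supported radial profile `p` with `∇p(y) = -k(y) y` and `∫ k > 0`. -/
lemma exists_radial_kernel (hd : 0 < d) : ∃ p k : Ed d → ℝ, IsTestFun p ∧ Continuous k ∧
    HasCompactSupport k ∧ (∀ y v, fderiv ℝ p y v = -(k y * ⟪y, v⟫)) ∧ 0 < ∫ y, k y := by
  have hE : ContDiff ℝ (⊤ : ℕ∞) expNegInvGlue := expNegInvGlue.contDiff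
  set p : Ed d → ℝ := fun y => expNegInvGlue (1 - ‖y‖ ^ 2) with hp
  set k : Ed d → ℝ := fun y => 2 * deriv expNegInvGlue (1 - ‖y‖ ^ 2) with hk
  have hder : ∀ y, HasFDerivAt p ((2 * -deriv expNegInvGlue (1 - ‖y‖ ^ 2)) • innerSL ℝ y) y := by
    intro y
    refine hasFDerivAt_radial (P := fun s => expNegInvGlue (1 - s)) y ?_
    have h1 : HasDerivAt (fun s : ℝ => 1 - s) (-1) (‖y‖ ^ 2) := by
      simpa using (hasDerivAt_id (‖y‖ ^ 2)).const_sub 1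
    have h2 := ((hE.differentiable (by simp)) (1 - ‖y‖ ^ 2)).hasDerivAt.comp (‖y‖ ^ 2) h1
    simpa using! h2
  have hgrad : ∀ y v, fderiv ℝ p y v = -(k y * ⟪y, v⟫) := by
    intro y v
    rw [(hder y).fderiv]
    simp [hk]
  have hp1 : ContDiff ℝ (⊤ : ℕ∞) p := hE.comp (contDiff_const.sub (contDiff_norm_sq ℝ))
  have hk1 : Continuous k := continuous_const.mul
    (contDiff_deriv_expNegInvGlue.continuous.comp (by fun_prop))
  have hp2 : HasCompactSupport p := by
    refine HasCompactSupport.intro (isCompact_closedBall 0 1) fun y hy => ?_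
    rw [mem_closedBall_zero_iff, not_le] at hy
    exact expNegInvGlue.zero_of_nonpos (by nlinarith)
  have hk2 : HasCompactSupport k := by
    refine HasCompactSupport.intro (isCompact_closedBall 0 1) fun y hy => ?_
    rw [mem_closedBall_zero_iff, not_le] at hy
    have h : expNegInvGlue =ᶠ[𝓝 (1 - ‖y‖ ^ 2)] fun _ => 0 := by
      filter_upwards [gt_mem_nhds (show 1 - ‖y‖ ^ 2 < 0 by nlinarith)] with s hs
      exact expNegInvGlue.zero_of_nonpos hs.le
    simp [hk, h.deriv_eq]
  have hk0 : ∀ y, 0 ≤ k y := fun y =>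
    mul_nonneg zero_le_two (expNegInvGlue.monotone.deriv_nonneg)
  refine ⟨p, k, ⟨hp1, hp2⟩, hk1, hk2, hgrad, ?_⟩
  obtain ⟨y, hy⟩ : ∃ y, k y ≠ 0 := by
    by_contra! hcon
    have h0 : ∀ y, fderiv ℝ p y = 0 := fun y => by
      ext v; simp [hgrad, hcon]
    have h1 := is_const_of_fderiv_eq_zero (hp1.differentiable (by simp)) h0 0
      (EuclideanSpace.single ⟨0, hd⟩ 1)
    have h2 : (0 : ℝ) < expNegInvGlue 1 := expNegInvGlue.pos_of_pos one_pos
    simp [hp] at h1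
    linarith
  exact hk1.integral_pos_of_hasCompactSupport_nonneg_nonzero hk2 hk0 hy

lemma fderiv_apply_eq_sum (L : Ed d →L[ℝ] ℝ) (v : Ed d) :
    L v = ∑ i, v i * L (EuclideanSpace.single i 1) := by
  conv_lhs => rw [← (EuclideanSpace.basisFun (Fin d) ℝ).sum_repr v]
  simp

lemma IsTestFun.fderiv_bounded {φ : Ed d → ℝ} (hφ : IsTestFun φ) :
    ∃ c, 0 ≤ c ∧ ∀ x, ‖fderiv ℝ φ x‖ ≤ c := by
  obtain ⟨c, hc⟩ := (hφ.2.fderiv ℝ).exists_bound_of_continuous (hφ.1.continuous_fderiv (by simp))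
  exact ⟨c, (norm_nonneg _).trans (hc 0), hc⟩

lemma IsTestFun.differentiable {φ : Ed d → ℝ} (hφ : IsTestFun φ) : Differentiable ℝ φ :=
  hφ.1.differentiable (by simp)

lemma fderiv_comp_sub_smul {g : Ed d → ℝ} (hg : Differentiable ℝ g) (x y v : Ed d) (r : ℝ) :
    fderiv ℝ (fun z => g (x - r • z)) y v = -(r * fderiv ℝ g (x - r • y) v) := by
  have h1 : HasFDerivAt (fun z : Ed d => x - r • z) (-(r • ContinuousLinearMap.id ℝ (Ed d))) y :=
    ((hasFDerivAt_id y).const_smul r).const_sub x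
  have h2 := (hg (x - r • y)).hasFDerivAt.comp y h1
  have h3 : fderiv ℝ (fun z => g (x - r • z)) y = _ := h2.fderiv
  rw [h3]
  simp

/-- Derivative in the scale `r` of the average `∫ k(y) g(x - r y) dy`. -/
lemma hasDerivAt_scaled_average {p k g : Ed d → ℝ} (hp : IsTestFun p) (hk : Continuous k)
    (hkc : HasCompactSupport k) (hpk : ∀ y v, fderiv ℝ p y v = -(k y * ⟪y, v⟫))
    (hg : IsTestFun g) (x : Ed d) (r : ℝ) :
    HasDerivAt (fun r : ℝ => ∫ y, k y * g (x - r • y))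
      (r * ∫ y, p y * lap g (x - r • y)) r := by
  obtain ⟨c, hc0, hc⟩ := hg.fderiv_bounded
  have hgd := hg.differentiable
  have hInt : ∀ {q h : Ed d → ℝ}, Continuous q → HasCompactSupport q → Continuous h →
      Integrable (fun y => q y * h (x - r • y)) := fun hq hqc hh =>
    (hq.mul (hh.comp (by fun_prop))).integrable_of_hasCompactSupport hqc.mul_right
  have hcf : Continuous (fun z : Ed d × Ed d => fderiv ℝ g z.1 z.2) :=
    (hg.1.continuous_fderiv_apply (by simp))
  have hmain := (hasDerivAt_integral_of_dominated_loc_of_deriv_le (μ := volume) (x₀ := r)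
    (s := univ) (F := fun r y => k y * g (x - r • y))
    (F' := fun r y => k y * -(fderiv ℝ g (x - r • y) y))
    (bound := fun y => |k y| * (c * ‖y‖)) univ_mem
    (Eventually.of_forall fun r => (hk.mul (hg.continuous.comp
      (by fun_prop))).aestronglyMeasurable)
    (hInt hk hkc hg.continuous)
    ((hk.mul (hcf.comp (by fun_prop : Continuous fun y : Ed d =>
      (x - r • y, y))).neg).aestronglyMeasurable) ?_ ?_ ?_).2
  · refine hmain.congr_deriv ?_
    symm
    have hexp : ∀ y, k y * -(fderiv ℝ g (x - r • y) y) = ∑ i : Fin d,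
        fderiv ℝ p y (EuclideanSpace.single i 1) *
          fderiv ℝ g (x - r • y) (EuclideanSpace.single i 1) := by
      intro y
      rw [fderiv_apply_eq_sum _ y, ← Finset.sum_neg_distrib, Finset.mul_sum]
      refine Finset.sum_congr rfl fun i _ => ?_
      rw [hpk, EuclideanSpace.inner_single_right]
      simp
      ring
    rw [integral_congr_ae (Eventually.of_forall hexp), integral_finsetSum _ fun i _ =>
      hInt (hp.fderiv_apply _).continuous (hp.fderiv_apply _).2 (hg.fderiv_apply _).continuous]
    have hibp : ∀ i : Fin d, ∫ y, fderiv ℝ p y (EuclideanSpace.single i 1) *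
          fderiv ℝ g (x - r • y) (EuclideanSpace.single i 1) =
        r * ∫ y, p y * hess2 g (x - r • y) i i := by
      intro i
      have hD := (hg.fderiv_apply (EuclideanSpace.single i 1)).differentiable
      have hfd : ∀ y, fderiv ℝ (fun z => fderiv ℝ g (x - r • z) (EuclideanSpace.single i 1)) y
          (EuclideanSpace.single i 1) = -(r * hess2 g (x - r • y) i i) := by
        intro y
        rw [hess2_eq hg.1, ← fderiv_comp_sub_smul hD]
      have h := integral_mul_fderiv_eq_neg_fderiv_mul_of_integrable (μ := (volume : Measure (Ed d)))
        (f := p) (g := fun z => fderiv ℝ g (x - r • z) (EuclideanSpace.single i 1))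
        (v := EuclideanSpace.single i 1)
        (hInt (hp.fderiv_apply _).continuous (hp.fderiv_apply _).2
          (hg.fderiv_apply _).continuous) ?_
        (hInt hp.continuous hp.2 (hg.fderiv_apply _).continuous)
        (fun y _ => hp.differentiable y) (fun y _ => ?_)
      · simp_rw [hfd] at h
        rw [← neg_eq_iff_eq_neg] at h
        rw [← h, ← integral_neg, ← integral_const_mul]
        congr 1 with y
        ring
      · simp_rw [hfd]
        have := (hInt hp.continuous hp.2 (hg.hess2 i i).continuous).const_mul (-r)
        refine this.congr (Eventually.of_forall fun y => ?_)
        ring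
      · exact (hD _).comp y (by fun_prop)
    rw [Finset.sum_congr rfl fun i _ => hibp i, ← Finset.mul_sum, ← integral_finsetSum _ fun i _ =>
      hInt hp.continuous hp.2 (hg.hess2 i i).continuous]
    simp_rw [← Finset.mul_sum]
    rfl
  · refine Eventually.of_forall fun y r _ => ?_
    rw [norm_mul, norm_neg, Real.norm_eq_abs (k y)]
    gcongr
    exact (fderiv ℝ g (x - r • y)).le_of_opNorm_le (hc _) y
  · exact (hk.abs.mul (continuous_const.mul continuous_norm)).integrable_of_hasCompactSupport
      hkc.norm.mul_right
  · refine Eventually.of_forall fun y r _ => ?_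
    have h1 : HasDerivAt (fun r : ℝ => x - r • y) (-y) r := by
      simpa using ((hasDerivAt_id r).smul_const y).const_sub x
    have h2 := (hgd (x - r • y)).hasFDerivAt.comp_hasDerivAt r h1
    simpa using h2.const_mul (k y)

lemma moll_comm (φ f : Ed d → ℝ) : moll φ f = moll f φ := by
  ext x
  rw [moll_apply, moll_apply']
  simp_rw [mul_comm]

lemma lap_moll {g ψ : Ed d → ℝ} (hg : IsTestFun g) (hψ : Continuous ψ) (hψc : HasCompactSupport ψ)
    (x : Ed d) : lap (moll g ψ) x = ∫ y, ψ y * lap g (x - y) := by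
  have hi : ∀ i : Fin d, Integrable (fun y => ψ y * hess2 g (x - y) i i) := fun i =>
    (hψ.mul ((hg.hess2 i i).continuous.comp (by fun_prop))).integrable_of_hasCompactSupport
      hψc.mul_right
  simp_rw [lap, moll_hess2 hg hψ, moll_apply', Finset.mul_sum]
  rw [integral_finsetSum _ fun i _ => hi i]

lemma IsTestFun.comp_smul {p : Ed d → ℝ} (hp : IsTestFun p) {r : ℝ} (hr : r ≠ 0) :
    IsTestFun (fun y => p (r • y)) :=
  ⟨hp.1.comp (contDiff_const_smul r), hp.2.comp_homeomorph (Homeomorph.smulOfNeZero r hr)⟩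

lemma fderiv_comp_smul_apply {p : Ed d → ℝ} (hp : Differentiable ℝ p) (r : ℝ) (y v : Ed d) :
    fderiv ℝ (fun z => p (r • z)) y v = r * fderiv ℝ p (r • y) v := by
  have h1 : HasFDerivAt (fun z : Ed d => r • z) (r • ContinuousLinearMap.id ℝ (Ed d)) y :=
    (hasFDerivAt_id y).const_smul r
  have h3 : fderiv ℝ (fun z => p (r • z)) y = _ := ((hp (r • y)).hasFDerivAt.comp y h1).fderiv
  rw [h3]
  simp

lemma integral_comp_smul_Ed (f : Ed d → ℝ) {r : ℝ} (hr : 0 < r) :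
    ∫ y, f (r • y) = (r ^ d)⁻¹ * ∫ y, f y := by
  rw [Measure.integral_comp_smul, finrank_euclideanSpace_fin, abs_of_pos (by positivity),
    smul_eq_mul]

lemma integral_comp_inv_smul_Ed (f : Ed d → ℝ) {r : ℝ} (hr : 0 < r) :
    ∫ y, f (r⁻¹ • y) = r ^ d * ∫ y, f y := by
  rw [integral_comp_smul_Ed f (inv_pos.2 hr), inv_pow, inv_inv]

lemma integral_lap_average_le {M : Measure (Ed d)} {K0 : ℝ} (hK : 0 ≤ K0)
    (h : ∀ φ : Ed d → ℝ, IsTestFun φ → ∀ A₀ A₁ : ℝ, 0 ≤ A₀ → 0 ≤ A₁ → (∀ x, |φ x| ≤ A₀) →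
      (∀ x, ‖fderiv ℝ φ x‖ ≤ A₁) → |∫ x, lap φ x ∂M| ≤ K0 * (A₀ + A₁))
    {p g : Ed d → ℝ} (hp : IsTestFun p) (hg : IsTestFun g) (hg1 : ∀ x, |g x| ≤ 1)
    {r : ℝ} (hr : 0 ≤ r) (hr1 : r ≤ 1) :
    |∫ x, r * (∫ y, p y * lap g (x - r • y)) ∂M| ≤
      K0 * ((∫ y, |p y|) + ∫ y, ‖fderiv ℝ p y‖) := by
  have hP0 : 0 ≤ ∫ y, |p y| := integral_nonneg fun _ => abs_nonneg _
  have hP1 : 0 ≤ ∫ y, ‖fderiv ℝ p y‖ := integral_nonneg fun _ => norm_nonneg _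
  rcases hr.eq_or_lt with rfl | hr
  · simp only [zero_mul, integral_zero, abs_zero]
    positivity
  set ψ : Ed d → ℝ := fun y => p (r⁻¹ • y) with hψdef
  have hψ : IsTestFun ψ := hp.comp_smul (inv_ne_zero hr.ne')
  have hkey : ∀ x, ∫ y, p y * lap g (x - r • y) = (r ^ d)⁻¹ * lap (moll g ψ) x := by
    intro x
    rw [lap_moll hg hψ.continuous hψ.2, ← integral_comp_smul_Ed _ hr]
    congr 1 with y
    rw [hψdef]
    simp [smul_smul, inv_mul_cancel₀ hr.ne']
  have hrd : 0 < r ^ d := by positivity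
  have hbd := h (moll g ψ) (moll_isTestFun hg hψ.continuous hψ.2) (r ^ d * ∫ y, |p y|)
    (r⁻¹ * (r ^ d * ∫ y, ‖fderiv ℝ p y‖)) (by positivity) (by positivity) ?_ ?_
  · simp_rw [hkey, ← mul_assoc]
    rw [integral_const_mul, abs_mul, abs_of_pos (by positivity)]
    refine (mul_le_mul_of_nonneg_left hbd (by positivity)).trans ?_
    have : r * (r ^ d)⁻¹ * (K0 * (r ^ d * (∫ y, |p y|) + r⁻¹ * (r ^ d * ∫ y, ‖fderiv ℝ p y‖))) =
        K0 * (r * (∫ y, |p y|) + ∫ y, ‖fderiv ℝ p y‖) := by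
      field_simp
    rw [this]
    gcongr
    exact mul_le_of_le_one_left hP0 hr1
  · intro x
    rw [← moll_comm, moll_apply, ← integral_comp_inv_smul_Ed _ hr, ← Real.norm_eq_abs]
    refine norm_integral_le_of_norm_le (hψ.integrable volume).abs
      (Eventually.of_forall fun y => ?_)
    rw [norm_mul]
    exact mul_le_of_le_one_left (abs_nonneg _) (hg1 _)
  · intro x
    refine ContinuousLinearMap.opNorm_le_bound _ (by positivity) fun v => ?_
    rw [← moll_comm, moll_fderiv hψ hg.continuous, moll_apply]
    have hi : Integrable (fun y => ‖fderiv ℝ p (r⁻¹ • y)‖) :=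
      ((hp.1.continuous_fderiv (by simp)).norm.comp (by fun_prop : Continuous fun y : Ed d =>
        r⁻¹ • y)).integrable_of_hasCompactSupport ((hp.2.fderiv ℝ).norm.comp_homeomorph
          (Homeomorph.smulOfNeZero r⁻¹ (inv_ne_zero hr.ne')))
    rw [← integral_comp_inv_smul_Ed (fun y => ‖fderiv ℝ p y‖) hr, ← integral_const_mul,
      ← integral_mul_const]
    refine norm_integral_le_of_norm_le ((hi.const_mul _).mul_const _)
      (Eventually.of_forall fun y => ?_)
    rw [norm_mul, fderiv_comp_smul_apply hp.differentiable, norm_mul, Real.norm_eq_abs r⁻¹,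
      abs_of_pos (inv_pos.2 hr), mul_assoc]
    refine (mul_le_of_le_one_left (by positivity) (hg1 _)).trans ?_
    gcongr
    exact ContinuousLinearMap.le_opNorm _ _

lemma norm_average_le {q u : Ed d → ℝ} (hq : Continuous q) (hqc : HasCompactSupport q)
    {c : ℝ} (huc : ∀ x, |u x| ≤ c) (s : ℝ) (x : Ed d) :
    ‖∫ y, q y * u (x - s • y)‖ ≤ c * ∫ y, |q y| := by
  rw [← integral_const_mul]
  refine norm_integral_le_of_norm_le ((hq.integrable_of_hasCompactSupport hqc).abs.const_mul _)
    (Eventually.of_forall fun y => ?_)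
  rw [norm_mul, mul_comm]
  exact mul_le_mul_of_nonneg_right (huc _) (abs_nonneg _)

lemma continuous_average {q u : Ed d → ℝ} (hq : Continuous q) (hqc : HasCompactSupport q)
    (hu : Continuous u) {c : ℝ} (huc : ∀ x, |u x| ≤ c) (s : ℝ) :
    Continuous (fun x => ∫ y, q y * u (x - s • y)) := by
  refine continuous_of_dominated (bound := fun y => c * |q y|) (fun x => ?_) (fun x => ?_)
    ((hq.integrable_of_hasCompactSupport hqc).abs.const_mul _) ?_
  · exact (hq.mul (hu.comp (by fun_prop))).aestronglyMeasurable
  · refine Eventually.of_forall fun y => ?_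
    rw [norm_mul, mul_comm]
    exact mul_le_mul_of_nonneg_right (huc _) (abs_nonneg _)
  · exact Eventually.of_forall fun y => continuous_const.mul (hu.comp (by fun_prop))

/-- A finite measure whose Laplacian is controlled by first-order quantities gives small mass
to test functions with small integral. -/
lemma exists_integral_le_of_lap_bound (hd : 0 < d) {M : Measure (Ed d)} [IsFiniteMeasure M]
    {K0 : ℝ} (hK : 0 ≤ K0)
    (h : ∀ φ : Ed d → ℝ, IsTestFun φ → ∀ A₀ A₁ : ℝ, 0 ≤ A₀ → 0 ≤ A₁ → (∀ x, |φ x| ≤ A₀) →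
      (∀ x, ‖fderiv ℝ φ x‖ ≤ A₁) → |∫ x, lap φ x ∂M| ≤ K0 * (A₀ + A₁)) :
    ∃ C, 0 ≤ C ∧ ∀ g : Ed d → ℝ, IsTestFun g → (∀ x, 0 ≤ g x) → (∀ x, g x ≤ 1) →
      ∀ r : ℝ, 0 < r → r ≤ 1 → ∫ x, g x ∂M ≤ C * r + C * ((r ^ d)⁻¹ * ∫ x, g x) := by
  obtain ⟨p, k, hp, hk, hkc, hpk, hc⟩ := exists_radial_kernel hd
  obtain ⟨Ck, hCk⟩ := hkc.exists_bound_of_continuous hk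
  have hCk0 : 0 ≤ Ck := (norm_nonneg _).trans (hCk 0)
  set c := ∫ y, k y with hcdef
  obtain ⟨A, hA⟩ : ∃ A, A = K0 * ((∫ y, |p y|) + ∫ y, ‖fderiv ℝ p y‖) := ⟨_, rfl⟩
  have hA0 : 0 ≤ A := hA ▸ mul_nonneg hK (add_nonneg (integral_nonneg fun _ => abs_nonneg _)
    (integral_nonneg fun _ => norm_nonneg _))
  refine ⟨c⁻¹ * (A + Ck * M.real univ), by positivity, fun g hg hg0 hg1 r hr hr1 => ?_⟩
  have hgabs : ∀ x, |g x| ≤ 1 := fun x => abs_le.2 ⟨by linarith [hg0 x], hg1 x⟩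
  obtain ⟨Cl, hCl0, hCl⟩ := hg.lap.bounded
  set H : ℝ → Ed d → ℝ := fun s x => ∫ y, k y * g (x - s • y) with hH
  have hHb : ∀ s x, ‖H s x‖ ≤ 1 * ∫ y, |k y| := fun s x =>
    norm_average_le hk hkc hgabs s x
  have hInt : ∀ s, Integrable (H s) M := fun s =>
    Integrable.of_bound (continuous_average hk hkc hg.continuous hgabs s).aestronglyMeasurable _
      (Eventually.of_forall (hHb s))
  have hder : ∀ s ∈ Icc 0 r, HasDerivWithinAt (fun s => ∫ x, H s x ∂M)
      (∫ x, s * (∫ y, p y * lap g (x - s • y)) ∂M) (Icc 0 r) s := by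
    intro s hs
    refine HasDerivAt.hasDerivWithinAt ?_
    refine (hasDerivAt_integral_of_dominated_loc_of_deriv_le (μ := M) (x₀ := s)
      (s := ball s 1) (F := H) (F' := fun s x => s * (∫ y, p y * lap g (x - s • y)))
      (bound := fun _ => (|s| + 1) * (Cl * ∫ y, |p y|)) (ball_mem_nhds _ one_pos)
      (Eventually.of_forall fun s => (hInt s).aestronglyMeasurable) (hInt s)
      (continuous_const.mul (continuous_average hp.continuous hp.2 hg.lap.continuous hCl
        s)).aestronglyMeasurable ?_ (integrable_const _) ?_).2
    · refine Eventually.of_forall fun x s' hs' => ?_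
      rw [norm_mul]
      refine mul_le_mul ?_ (norm_average_le hp.continuous hp.2 hCl s' x) (norm_nonneg _)
        (by positivity)
      rw [mem_ball_iff_norm] at hs'
      rw [← Real.norm_eq_abs s]
      linarith [norm_le_norm_add_norm_sub' s' s]
    · exact Eventually.of_forall fun x s' _ => hasDerivAt_scaled_average hp hk hkc hpk hg x s'
  have hmv := norm_image_sub_le_of_norm_deriv_le_segment' hder
    (fun s hs => integral_lap_average_le hK h hp hg hgabs hs.1 (hs.2.le.trans hr1)) r
    (right_mem_Icc.2 hr.le)
  have h0 : ∫ x, H 0 x ∂M = c * ∫ x, g x ∂M := by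
    simp only [hH, zero_smul, sub_zero, integral_mul_const, integral_const_mul, hcdef]
  have hr' : ∫ x, H r x ∂M ≤ Ck * ((r ^ d)⁻¹ * ∫ x, g x) * M.real univ := by
    have hpt : ∀ x, H r x ≤ Ck * ((r ^ d)⁻¹ * ∫ x, g x) := by
      intro x
      have hgx : IsTestFun (fun y => g (x - y)) :=
        ⟨hg.1.comp (contDiff_const.sub contDiff_id), hg.2.comp_homeomorph (Homeomorph.subLeft x)⟩
      have hgi := (hgx.comp_smul hr.ne').integrable volume
      rw [← integral_sub_left_eq_self g volume x, ← integral_comp_smul_Ed _ hr,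
        ← integral_const_mul]
      refine integral_mono ?_ (hgi.const_mul _) fun y => ?_
      · exact ((hk.mul (hgx.comp_smul hr.ne').continuous)).integrable_of_hasCompactSupport
          hkc.mul_right
      · exact mul_le_mul_of_nonneg_right ((le_abs_self _).trans (hCk y)) (hg0 _)
    refine (integral_mono (hInt r) (integrable_const _) hpt).trans_eq ?_
    rw [integral_const, smul_eq_mul, mul_comm]
  rw [h0, Real.norm_eq_abs, abs_le, sub_zero, ← hA] at hmv
  have h3 : c * ∫ x, g x ∂M ≤ A * r + Ck * ((r ^ d)⁻¹ * ∫ x, g x) * M.real univ := by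
    linarith [hmv.1]
  have h4 : ∫ x, g x ∂M ≤ c⁻¹ * (A * r + Ck * ((r ^ d)⁻¹ * ∫ x, g x) * M.real univ) := by
    rw [le_inv_mul_iff₀ hc]; exact h3
  refine h4.trans ?_
  have hI : 0 ≤ ∫ x, g x := integral_nonneg hg0
  rw [← mul_add, mul_assoc c⁻¹]
  refine mul_le_mul_of_nonneg_left ?_ (inv_nonneg.2 hc.le)
  have e1 : 0 ≤ Ck * M.real univ * r := by positivity
  have e2 : 0 ≤ A * ((r ^ d)⁻¹ * ∫ x, g x) := by positivity
  nlinarith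

/-- A finite measure whose Laplacian is controlled by first-order quantities is absolutely
continuous. -/
lemma absolutelyContinuous_of_lap_bound (hd : 0 < d) {M : Measure (Ed d)} [IsFiniteMeasure M]
    {K0 : ℝ} (hK : 0 ≤ K0)
    (h : ∀ φ : Ed d → ℝ, IsTestFun φ → ∀ A₀ A₁ : ℝ, 0 ≤ A₀ → 0 ≤ A₁ → (∀ x, |φ x| ≤ A₀) →
      (∀ x, ‖fderiv ℝ φ x‖ ≤ A₁) → |∫ x, lap φ x ∂M| ≤ K0 * (A₀ + A₁)) : M ≪ volume := by
  obtain ⟨C, hC, hCg⟩ := exists_integral_le_of_lap_bound hd hK h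
  have hcompact : ∀ N : Set (Ed d), IsCompact N → volume N = 0 → M N = 0 := by
    intro N hN hN0
    have hle : ∀ r : ℝ, 0 < r → r ≤ 1 → M.real N ≤ (2 * C) * r := by
      intro r hr hr1
      have hpos : (0 : ℝ) < r ^ (d + 1) := by positivity
      obtain ⟨U, hNU, hUo, hU⟩ := N.exists_isOpen_lt_of_lt (μ := volume)
        (ENNReal.ofReal (r ^ (d + 1))) (by rw [hN0]; simpa using hpos)
      obtain ⟨g, hg, hg0, hg1, hgN, hgU⟩ := exists_testFun_cutoff hN hUo hNU
      have h1 : M.real N ≤ ∫ x, g x ∂M := by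
        rw [← integral_indicator_one hN.measurableSet]
        refine integral_mono ((integrable_const _).indicator hN.measurableSet)
          (hg.integrable M) fun x => ?_
        by_cases hx : x ∈ N
        · simp [hx, hgN]
        · simp [hx, hg0]
      have h2 : ∫ x, g x ≤ r ^ (d + 1) := by
        have hUfin : volume U ≠ ∞ := hU.ne_top
        have : ∫ x, g x ≤ volume.real U := by
          rw [← integral_indicator_one hUo.measurableSet]
          refine integral_mono (hg.integrable _)
            ((integrable_indicator_iff hUo.measurableSet).2 (integrableOn_const hUfin))
            fun x => ?_
          by_cases hx : x ∈ U
          · simp [hx, hg1]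
          · simp [hx, hgU]
        refine this.trans ?_
        rw [Measure.real]
        exact ENNReal.toReal_le_of_le_ofReal hpos.le hU.le
      refine h1.trans ((hCg g hg hg0 hg1 r hr hr1).trans ?_)
      have h3 : (r ^ d)⁻¹ * ∫ x, g x ≤ r := by
        rw [inv_mul_le_iff₀ (by positivity), ← pow_succ]
        exact h2
      nlinarith
    have h0 : M.real N ≤ 0 := by
      refine le_of_forall_pos_le_add fun ε hε => ?_
      have h5 : 0 < ε / (2 * C + 1) := by positivity
      refine (hle (min 1 (ε / (2 * C + 1))) (lt_min one_pos h5) (min_le_left _ _)).trans ?_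
      have h6 : min 1 (ε / (2 * C + 1)) ≤ ε / (2 * C + 1) := min_le_right _ _
      have h7 : (2 * C + 1) * (ε / (2 * C + 1)) = ε := by field_simp
      nlinarith [lt_min one_pos h5]
    have := le_antisymm h0 measureReal_nonneg
    rwa [measureReal_eq_zero_iff] at this
  refine Measure.AbsolutelyContinuous.mk fun s hs hs0 => ?_
  rw [hs.measure_eq_iSup_isCompact]
  simp only [ENNReal.iSup_eq_zero]
  exact fun K hKs hK => hcompact K hK (measure_mono_null hKs hs0)

lemma fderiv_radial {P : ℝ → ℝ} {P' : ℝ} (x v : Ed d) (hP : HasDerivAt P P' (‖x‖ ^ 2)) :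
    fderiv ℝ (fun z : Ed d => P (‖z‖ ^ 2)) x v = 2 * P' * ⟪x, v⟫ := by
  rw [(hasFDerivAt_radial x hP).fderiv]
  simp

lemma lap_radial {P P' P'' : ℝ → ℝ} (hP : ∀ r, 0 ≤ r → HasDerivAt P (P' r) r)
    (hP' : ∀ r, 0 ≤ r → HasDerivAt P' (P'' r) r)
    (hφ : ContDiff ℝ (⊤ : ℕ∞) (fun z : Ed d => P (‖z‖ ^ 2))) (x : Ed d) :
    lap (fun z : Ed d => P (‖z‖ ^ 2)) x =
      2 * d * P' (‖x‖ ^ 2) + 4 * ‖x‖ ^ 2 * P'' (‖x‖ ^ 2) := by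
  have hh : ∀ i : Fin d, hess2 (fun z : Ed d => P (‖z‖ ^ 2)) x i i =
      2 * P' (‖x‖ ^ 2) + 4 * P'' (‖x‖ ^ 2) * (x i) ^ 2 := by
    intro i
    rw [hess2_eq hφ]
    have h1 : (fun y : Ed d => fderiv ℝ (fun z : Ed d => P (‖z‖ ^ 2)) y
        (EuclideanSpace.single i 1)) = fun y => 2 * P' (‖y‖ ^ 2) * y i := by
      ext y
      rw [fderiv_radial y _ (hP _ (by positivity)), EuclideanSpace.inner_single_right]
      simp
    rw [h1]
    have h2 := (hasFDerivAt_radial x (hP' _ (by positivity : 0 ≤ ‖x‖ ^ 2))).const_mul 2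
    have h3 : HasFDerivAt (fun y : Ed d => y i) (EuclideanSpace.proj (𝕜 := ℝ) i) x :=
      (EuclideanSpace.proj (𝕜 := ℝ) i).hasFDerivAt
    have h4 : fderiv ℝ (fun y : Ed d => 2 * P' (‖y‖ ^ 2) * y i) x = _ := (h2.mul h3).fderiv
    rw [h4]
    simp [EuclideanSpace.inner_single_right]
    ring
  have hn : ∑ i, (x i) ^ 2 = ‖x‖ ^ 2 := by simp [EuclideanSpace.norm_sq_eq]
  rw [lap, Finset.sum_congr rfl fun i _ => hh i, Finset.sum_add_distrib, ← Finset.mul_sum,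
    ← Finset.mul_sum, hn,
    Finset.sum_const, Finset.card_univ, Fintype.card_fin, nsmul_eq_mul]
  ring

/-- A smooth truncation profile: its derivative decreases from `1` to `0`. -/
def truncProfile (N : ℝ) (s : ℝ) : ℝ := ∫ u in (0 : ℝ)..s, Real.smoothTransition (2 - u / N)

lemma continuous_trunc_integrand (N : ℝ) :
    Continuous fun u : ℝ => Real.smoothTransition (2 - u / N) :=
  Real.smoothTransition.continuous.comp (by fun_prop)

lemma hasDerivAt_truncProfile (N s : ℝ) :
    HasDerivAt (truncProfile N) (Real.smoothTransition (2 - s / N)) s :=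
  (continuous_trunc_integrand N).integral_hasStrictDerivAt 0 s |>.hasDerivAt

lemma contDiff_trunc_integrand (N : ℝ) :
    ContDiff ℝ (⊤ : ℕ∞) fun u : ℝ => Real.smoothTransition (2 - u / N) :=
  Real.smoothTransition.contDiff.comp (by fun_prop)

lemma contDiff_truncProfile (N : ℝ) : ContDiff ℝ (⊤ : ℕ∞) (truncProfile N) := by
  rw [contDiff_infty_iff_deriv]
  refine ⟨fun s => (hasDerivAt_truncProfile N s).differentiableAt, ?_⟩
  rw [show deriv (truncProfile N) = _ from funext fun s => (hasDerivAt_truncProfile N s).deriv]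
  exact contDiff_trunc_integrand N

lemma truncProfile_eq {N s : ℝ} (hN : 0 < N) (hs0 : 0 ≤ s) (hs : s ≤ N) :
    truncProfile N s = s := by
  have : EqOn (fun u : ℝ => Real.smoothTransition (2 - u / N)) (fun _ => (1 : ℝ)) (uIcc 0 s) := by
    intro u hu
    rw [uIcc_of_le hs0] at hu
    refine Real.smoothTransition.one_of_one_le ?_
    have : u / N ≤ 1 := (div_le_one hN).2 (hu.2.trans hs)
    linarith
  rw [truncProfile, intervalIntegral.integral_congr this]
  simp

lemma truncProfile_const {N s : ℝ} (hN : 0 < N) (hs : 2 * N ≤ s) :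
    truncProfile N s = truncProfile N (2 * N) := by
  have hi := fun a b => (continuous_trunc_integrand N).intervalIntegrable (μ := volume) a b
  have h0 : ∫ u in (2 * N)..s, Real.smoothTransition (2 - u / N) = 0 := by
    have : EqOn (fun u : ℝ => Real.smoothTransition (2 - u / N)) (fun _ => (0 : ℝ))
        (uIcc (2 * N) s) := by
      intro u hu
      rw [uIcc_of_le hs] at hu
      refine Real.smoothTransition.zero_of_nonpos ?_
      have : 2 ≤ u / N := (le_div_iff₀ hN).2 hu.1
      linarith
    rw [intervalIntegral.integral_congr this]
    simp
  rw [truncProfile, truncProfile, ← intervalIntegral.integral_add_adjacent_intervals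
    (hi 0 (2 * N)) (hi (2 * N) s), h0, add_zero]

lemma truncProfile_nonneg (N : ℝ) {s : ℝ} (hs : 0 ≤ s) : 0 ≤ truncProfile N s :=
  intervalIntegral.integral_nonneg hs fun _ _ => Real.smoothTransition.nonneg _

lemma truncProfile_le (N : ℝ) {s : ℝ} (hs : 0 ≤ s) : truncProfile N s ≤ s := by
  have := intervalIntegral.integral_mono_on hs
    ((continuous_trunc_integrand N).intervalIntegrable (μ := volume) 0 s)
    (continuous_const (y := (1 : ℝ)) |>.intervalIntegrable 0 s)
    fun u _ => Real.smoothTransition.le_one _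
  simpa using! this

lemma deriv_trunc_integrand_nonpos {N : ℝ} (hN : 0 < N) (s : ℝ) :
    deriv (fun u : ℝ => Real.smoothTransition (2 - u / N)) s ≤ 0 := by
  refine Antitone.deriv_nonpos fun u v huv => Real.smoothTransition.monotone ?_
  gcongr

/-- Truncated Lyapunov functions `ρ_N((1+|x|²)^q)`. -/
lemma exists_lyapunov_testFun {q κ c : ℝ} (hq : 1 ≤ q) (hκ : 0 < κ) :
    ∃ K0, 0 ≤ K0 ∧ ∀ N : ℝ, 1 ≤ N → ∃ (φ : Ed d → ℝ) (a : ℝ), IsTestFun φ ∧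
      (∀ x, 0 ≤ φ x + a) ∧ (∀ x, φ x + a ≤ (1 + ‖x‖ ^ 2) ^ q) ∧
      (∀ x, (1 + ‖x‖ ^ 2) ^ q ≤ N → φ x + a = (1 + ‖x‖ ^ 2) ^ q) ∧
      ∀ B : Ed d → Ed d, (∀ x, ⟪x, B x⟫ ≤ -κ * ‖x‖ ^ 2 + c * ‖x‖) →
        ∀ x, LopI B φ x ≤ K0 := by
  obtain ⟨A, hA⟩ : ∃ A, A = 2 * d + c ^ 2 / κ + 4 * (q - 1) := ⟨_, rfl⟩
  have hA0 : 0 ≤ A := by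
    have : 0 ≤ c ^ 2 / κ := by positivity
    have : (0 : ℝ) ≤ d := by positivity
    linarith
  refine ⟨q * ((1 + A / κ) ^ (q - 1) * A), by positivity, fun N hN => ?_⟩
  have hN0 : 0 < N := by linarith
  set χ : ℝ → ℝ := fun u => Real.smoothTransition (2 - u / N) with hχ
  set F : ℝ → ℝ := fun r => (1 + r) ^ q with hF
  set P : ℝ → ℝ := fun r => truncProfile N (F r) - truncProfile N (2 * N) with hP
  set P' : ℝ → ℝ := fun r => χ (F r) * (q * (1 + r) ^ (q - 1)) with hP'
  set P'' : ℝ → ℝ := fun r => deriv χ (F r) * (q * (1 + r) ^ (q - 1)) * (q * (1 + r) ^ (q - 1)) +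
    χ (F r) * (q * ((q - 1) * (1 + r) ^ (q - 1 - 1))) with hP''
  have hpow : ∀ (e r : ℝ), 0 ≤ r → HasDerivAt (fun r : ℝ => (1 + r) ^ e)
      (e * (1 + r) ^ (e - 1)) r := by
    intro e r hr
    have h1 : HasDerivAt (fun r : ℝ => 1 + r) 1 r := (hasDerivAt_id r).const_add 1
    simpa using h1.rpow_const (p := e) (Or.inl (by positivity))
  have hd1 : ∀ r, 0 ≤ r → HasDerivAt P (P' r) r := fun r hr =>
    ((hasDerivAt_truncProfile N (F r)).comp r (hpow q r hr)).sub_const _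
  have hχd : ∀ s, HasDerivAt χ (deriv χ s) s := fun s =>
    ((contDiff_trunc_integrand N).differentiable (by simp) s).hasDerivAt
  have hd2 : ∀ r, 0 ≤ r → HasDerivAt P' (P'' r) r := fun r hr =>
    ((hχd (F r)).comp r (hpow q r hr)).mul ((hpow (q - 1) r hr).const_mul q)
  have hsm : ContDiff ℝ (⊤ : ℕ∞) (fun z : Ed d => P (‖z‖ ^ 2)) := by
    refine ((contDiff_truncProfile N).comp ?_).sub contDiff_const
    exact (contDiff_const.add (contDiff_norm_sq ℝ)).rpow_const_of_ne fun x => by positivity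
  have hF0 : ∀ x : Ed d, 0 ≤ F (‖x‖ ^ 2) := fun x => by positivity
  refine ⟨fun z => P (‖z‖ ^ 2), truncProfile N (2 * N), ⟨hsm, ?_⟩, fun x => ?_, fun x => ?_,
    fun x hx => ?_, fun B hB x => ?_⟩
  · refine HasCompactSupport.intro (isCompact_closedBall 0 (2 * N)) fun y hy => ?_
    rw [mem_closedBall_zero_iff, not_le] at hy
    have h1 : 2 * N ≤ F (‖y‖ ^ 2) := by
      have h2 : 1 + ‖y‖ ^ 2 ≤ F (‖y‖ ^ 2) := by
        simpa using Real.rpow_le_rpow_of_exponent_le (x := 1 + ‖y‖ ^ 2)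
          (by nlinarith [sq_nonneg ‖y‖]) hq
      nlinarith
    simp [hP, truncProfile_const hN0 h1]
  · simpa [hP] using truncProfile_nonneg N (hF0 x)
  · simpa [hP] using truncProfile_le N (hF0 x)
  · simpa [hP] using truncProfile_eq hN0 (hF0 x) hx
  · rw [LopI_eq, lap_radial hd1 hd2 hsm, fderiv_radial x _ (hd1 _ (by positivity))]
    obtain ⟨r, hr⟩ : ∃ r, r = ‖x‖ ^ 2 := ⟨_, rfl⟩
    have hr0 : 0 ≤ r := hr ▸ by positivity
    rw [← hr]
    have hχ0 : 0 ≤ χ (F r) := Real.smoothTransition.nonneg _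
    have hχ1 : χ (F r) ≤ 1 := Real.smoothTransition.le_one _
    obtain ⟨E, hE⟩ : ∃ E, E = (1 + r) ^ (q - 1) := ⟨_, rfl⟩
    have hE0 : 0 < E := hE ▸ by positivity
    have hE2 : r * (1 + r) ^ (q - 1 - 1) ≤ E := by
      rw [Real.rpow_sub_one (by positivity) (q - 1), ← hE, mul_div_assoc', div_le_iff₀
        (by positivity)]
      nlinarith
    have hP1 : P' r = χ (F r) * (q * E) := by rw [hE]
    have hP2 : r * P'' r ≤ χ (F r) * (q * ((q - 1) * E)) := by
      have e1 : deriv χ (F r) * (q * (1 + r) ^ (q - 1)) * (q * (1 + r) ^ (q - 1)) ≤ 0 := by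
        rw [mul_assoc]
        exact mul_nonpos_of_nonpos_of_nonneg (deriv_trunc_integrand_nonpos hN0 _)
          (mul_self_nonneg _)
      have e2 : χ (F r) * (q * ((q - 1) * (r * (1 + r) ^ (q - 1 - 1)))) ≤
          χ (F r) * (q * ((q - 1) * E)) := by
        have : 0 ≤ q - 1 := by linarith
        gcongr
      have e3 := mul_nonpos_of_nonneg_of_nonpos hr0 e1
      calc r * P'' r = r * (deriv χ (F r) * (q * (1 + r) ^ (q - 1)) * (q * (1 + r) ^ (q - 1))) +
            χ (F r) * (q * ((q - 1) * (r * (1 + r) ^ (q - 1 - 1)))) := by rw [hP'']; ring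
        _ ≤ _ := by linarith
    have hin : 2 * ⟪x, B x⟫ ≤ -κ * r + c ^ 2 / κ := by
      have h1 := hB x
      have h2 : 2 * c * ‖x‖ ≤ κ * ‖x‖ ^ 2 + c ^ 2 / κ := by
        have h3 : 0 ≤ (κ * ‖x‖ - c) ^ 2 / κ := by positivity
        have h4 : (κ * ‖x‖ - c) ^ 2 / κ = κ * ‖x‖ ^ 2 + c ^ 2 / κ - 2 * c * ‖x‖ := by
          field_simp; ring
        linarith
      rw [hr]; linarith
    have hb : 2 * d * P' r + 4 * r * P'' r + 2 * P' r * ⟪x, B x⟫ ≤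
        χ (F r) * (q * (E * (A - κ * r))) := by
      have h1 : P' r * (2 * ⟪x, B x⟫) ≤ P' r * (-κ * r + c ^ 2 / κ) :=
        mul_le_mul_of_nonneg_left hin (by rw [hP1]; positivity)
      rw [hP1] at h1 ⊢
      rw [hA]
      nlinarith
    refine hb.trans ?_
    have hfin : E * (A - κ * r) ≤ (1 + A / κ) ^ (q - 1) * A := by
      rcases le_total r (A / κ) with h | h
      · have h1 : E ≤ (1 + A / κ) ^ (q - 1) := by
          rw [hE]
          exact Real.rpow_le_rpow (by positivity) (by linarith) (by linarith)
        have h2 : κ * r ≤ A := by rwa [le_div_iff₀ hκ, mul_comm] at h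
        have h3 : 0 ≤ κ * r := by positivity
        exact mul_le_mul h1 (by linarith) (by linarith) (by positivity)
      · have h2 : A ≤ κ * r := by rwa [div_le_iff₀ hκ, mul_comm] at h
        exact (mul_nonpos_of_nonneg_of_nonpos hE0.le (by linarith)).trans (by positivity)
    have h5 : q * (E * (A - κ * r)) ≤ q * ((1 + A / κ) ^ (q - 1) * A) := by gcongr
    have h6 : 0 ≤ q * ((1 + A / κ) ^ (q - 1) * A) := by positivity
    nlinarith

lemma measure_le_of_forall_testFun {μ ν : Measure (Ed d)} [IsProbabilityMeasure μ]
    [IsProbabilityMeasure ν] (h : ∀ φ : Ed d → ℝ, IsTestFun φ → ∫ x, φ x ∂μ = ∫ x, φ x ∂ν)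
    {K : Set (Ed d)} (hK : IsCompact K) : μ K ≤ ν K := by
  refine ENNReal.le_of_forall_pos_le_add fun ε hε _ => ?_
  obtain ⟨U, hKU, hUo, hU⟩ := K.exists_isOpen_le_add ν (ε := ε) (by simpa using hε.ne')
  refine le_trans ?_ hU
  obtain ⟨g, hg, hg0, hg1, hgK, hgU⟩ := exists_testFun_cutoff hK hUo hKU
  rw [← ofReal_measureReal (μ := μ), ← ofReal_measureReal (μ := ν)]
  refine ENNReal.ofReal_le_ofReal ?_
  calc μ.real K ≤ ∫ x, g x ∂μ := by
        rw [← integral_indicator_one hK.measurableSet]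
        refine integral_mono ((integrable_const _).indicator hK.measurableSet)
          (hg.integrable μ) fun x => ?_
        by_cases hx : x ∈ K <;> simp [hx, hgK, hg0]
    _ = ∫ x, g x ∂ν := h g hg
    _ ≤ ν.real U := by
        rw [← integral_indicator_one hUo.measurableSet]
        refine integral_mono (hg.integrable ν) ((integrable_const _).indicator hUo.measurableSet)
          fun x => ?_
        by_cases hx : x ∈ U <;> simp [hx, hgU, hg1]

lemma measure_eq_of_forall_testFun {μ ν : Measure (Ed d)} [IsProbabilityMeasure μ]
    [IsProbabilityMeasure ν] (h : ∀ φ : Ed d → ℝ, IsTestFun φ → ∫ x, φ x ∂μ = ∫ x, φ x ∂ν) :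
    μ = ν := by
  have hc : ∀ K : Set (Ed d), IsCompact K → μ K = ν K := fun K hK =>
    le_antisymm (measure_le_of_forall_testFun h hK)
      (measure_le_of_forall_testFun (fun φ hφ => (h φ hφ).symm) hK)
  ext s hs
  rw [hs.measure_eq_iSup_isCompact, hs.measure_eq_iSup_isCompact]
  simp +contextual [hc]

lemma LopI_measurable {B : Ed d → Ed d} (hB : Measurable B) {φ : Ed d → ℝ} (hφ : IsTestFun φ) :
    Measurable (LopI B φ) := by
  rw [show LopI B φ = _ from funext fun x => LopI_eq B x]
  have hcf : Continuous (fun z : Ed d × Ed d => fderiv ℝ φ z.1 z.2) :=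
    hφ.1.continuous_fderiv_apply (by simp)
  exact hφ.lap.continuous.measurable.add (hcf.measurable.comp (measurable_id.prodMk hB))

lemma exists_LopI_bound {φ : Ed d → ℝ} (hφ : IsTestFun φ) (c m : ℝ) :
    ∃ c', 0 ≤ c' ∧ ∀ B : Ed d → Ed d, (∀ x, ‖B x‖ ≤ c * (1 + ‖x‖) ^ m) →
      ∀ x, |LopI B φ x| ≤ c' := by
  obtain ⟨A, hA0, hA⟩ := hφ.lap.bounded
  have h2 : HasCompactSupport fun x => ‖fderiv ℝ φ x‖ * (c * (1 + ‖x‖) ^ m) :=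
    (hφ.2.fderiv ℝ).norm.mul_right
  obtain ⟨A', hA'⟩ := h2.exists_bound_of_continuous
    ((hφ.1.continuous_fderiv (by simp)).norm.mul
      (continuous_const.mul (continuous_one_add_norm_rpow m)))
  refine ⟨A + A', add_nonneg hA0 ((norm_nonneg _).trans (hA' 0)), fun B hB x => ?_⟩
  rw [LopI_eq]
  refine (abs_add_le _ _).trans (add_le_add (hA x) ?_)
  refine ((fderiv ℝ φ x).le_opNorm _).trans (le_trans ?_ ((le_abs_self _).trans (hA' x)))
  gcongr
  exact hB x

lemma LopI_add (B : Ed d → Ed d) {φ ψ : Ed d → ℝ} (hφ : IsTestFun φ) (hψ : IsTestFun ψ)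
    (x : Ed d) : LopI B (φ + ψ) x = LopI B φ x + LopI B ψ x := by
  have hf : ∀ y, fderiv ℝ (φ + ψ) y = fderiv ℝ φ y + fderiv ℝ ψ y := fun y =>
    fderiv_add (hφ.differentiable y) (hψ.differentiable y)
  have hh : ∀ i, hess2 (φ + ψ) x i i = hess2 φ x i i + hess2 ψ x i i := by
    intro i
    rw [hess2_eq (hφ.add hψ).1, hess2_eq hφ.1, hess2_eq hψ.1]
    simp_rw [hf, add_apply]
    rw [fderiv_fun_add ((hφ.fderiv_apply _).differentiable x)
      ((hψ.fderiv_apply _).differentiable x)]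
    rfl
  simp only [LopI_eq, lap, hh, hf, Finset.sum_add_distrib, add_apply]
  ring

/-- A curve of probability measures solving the linear equation with time-dependent drift `β`,
frozen for negative times. -/
structure IsFlow (m c : ℝ) (β : ℝ → Ed d → Ed d) (μ : ℝ → Measure (Ed d)) : Prop where
  one_le : 1 ≤ m
  prob : ∀ s, IsProbabilityMeasure (μ s)
  meas : ∀ s, Measurable (β s)
  grow : ∀ s x, ‖β s x‖ ≤ c * (1 + ‖x‖) ^ m
  congr : ∀ s t, μ s = μ t → β s = β t
  frozen : ∀ s, s ≤ 0 → μ s = μ 0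
  eqn : ∀ φ : Ed d → ℝ, IsTestFun φ → ∀ t : ℝ, 0 ≤ t →
    ∫ x, φ x ∂(μ t) - ∫ x, φ x ∂(μ 0) = ∫ s in (0 : ℝ)..t, ∫ x, LopI (β s) φ x ∂(μ s)

namespace IsFlow

variable {m c : ℝ} {β : ℝ → Ed d → Ed d} {μ : ℝ → Measure (Ed d)}

lemma LopI_integrable (h : IsFlow m c β μ) {φ : Ed d → ℝ} (hφ : IsTestFun φ) (s : ℝ) :
    Integrable (LopI (β s) φ) (μ s) := by
  have := h.prob s
  obtain ⟨c', _, hc'⟩ := exists_LopI_bound hφ c m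
  exact Integrable.of_bound (LopI_measurable (h.meas s) hφ).aestronglyMeasurable c'
    (Eventually.of_forall (hc' _ (h.grow s)))

lemma exists_bound (h : IsFlow m c β μ) {φ : Ed d → ℝ} (hφ : IsTestFun φ) :
    ∃ c', 0 ≤ c' ∧ ∀ s, |∫ x, LopI (β s) φ x ∂(μ s)| ≤ c' := by
  obtain ⟨c', hc0, hc'⟩ := exists_LopI_bound hφ c m
  refine ⟨c', hc0, fun s => ?_⟩
  have := h.prob s
  simpa using! norm_integral_le_of_norm_le_const (μ := μ s) (f := LopI (β s) φ)
    (Eventually.of_forall (hc' _ (h.grow s)))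

lemma eq_of_not_intervalIntegrable (h : IsFlow m c β μ) {φ : Ed d → ℝ} (hφ : IsTestFun φ)
    {t : ℝ} (ht : 0 ≤ t)
    (hn : ¬ IntervalIntegrable (fun s => ∫ x, LopI (β s) φ x ∂(μ s)) volume 0 t) :
    μ t = μ 0 := by
  have hp := h.prob
  have key : ∀ ψ : Ed d → ℝ, IsTestFun ψ →
      ¬ IntervalIntegrable (fun s => ∫ x, LopI (β s) ψ x ∂(μ s)) volume 0 t →
      ∫ x, ψ x ∂(μ t) = ∫ x, ψ x ∂(μ 0) := by
    intro ψ hψ hn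
    have := h.eqn ψ hψ t ht
    rw [intervalIntegral.integral_undef hn] at this
    linarith
  refine measure_eq_of_forall_testFun fun ψ hψ => ?_
  by_cases hi : IntervalIntegrable (fun s => ∫ x, LopI (β s) ψ x ∂(μ s)) volume 0 t
  · have h1 := key (φ + ψ) (hφ.add hψ) ?_
    · have h2 := key φ hφ hn
      simp only [Pi.add_apply] at h1
      rw [integral_add (hφ.integrable _) (hψ.integrable _),
        integral_add (hφ.integrable _) (hψ.integrable _)] at h1
      linarith
    · intro hcon
      refine hn ?_
      have := hcon.sub hi
      refine this.congr fun s _ => ?_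
      simp_rw [LopI_add _ hφ hψ]
      simp [integral_add (h.LopI_integrable hφ s) (h.LopI_integrable hψ s)]
  · exact key ψ hψ hi

lemma intervalIntegrable (h : IsFlow m c β μ) {φ : Ed d → ℝ} (hφ : IsTestFun φ) {t : ℝ}
    (ht : 0 ≤ t) : IntervalIntegrable (fun s => ∫ x, LopI (β s) φ x ∂(μ s)) volume 0 t := by
  set G : ℝ → ℝ := fun s => ∫ x, LopI (β s) φ x ∂(μ s) with hG
  obtain ⟨c', _, hc'⟩ := h.exists_bound hφ
  by_contra hbad
  set S : Set ℝ := {t | 0 ≤ t ∧ ¬ IntervalIntegrable G volume 0 t} with hS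
  have hSne : S.Nonempty := ⟨t, ht, hbad⟩
  have hSb : BddBelow S := ⟨0, fun s hs => hs.1⟩
  have habove : ∀ s, sInf S < s → G s = G 0 := by
    intro s hs
    obtain ⟨u, hu, hus⟩ := (csInf_lt_iff hSb hSne).1 hs
    have h1 : ¬ IntervalIntegrable G volume 0 s := fun hcon =>
      hu.2 (hcon.mono_set (by
        rw [uIcc_of_le hu.1, uIcc_of_le (hu.1.trans hus.le)]
        exact Icc_subset_Icc_right hus.le))
    have h2 := h.eq_of_not_intervalIntegrable hφ (hu.1.trans hus.le) h1
    simp only [hG]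
    rw [h.congr s 0 h2, h2]
  have hbelow : ∀ n : ℕ,
      AEStronglyMeasurable G (volume.restrict (Ioc 0 (sInf S - 1 / (n + 1)))) := by
    intro n
    rcases le_or_gt 0 (sInf S - 1 / ((n : ℝ) + 1)) with h0 | h0
    · have h1 : IntervalIntegrable G volume 0 (sInf S - 1 / ((n : ℝ) + 1)) := by
        by_contra hcon
        have := csInf_le hSb (show sInf S - 1 / ((n : ℝ) + 1) ∈ S from ⟨h0, hcon⟩)
        have : (0 : ℝ) < 1 / ((n : ℝ) + 1) := by positivity
        linarith
      exact h1.1.aestronglyMeasurable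
    · rw [Ioc_eq_empty (by linarith)]
      simp
  have h1 : AEStronglyMeasurable G
      (volume.restrict ((⋃ n : ℕ, Ioc 0 (sInf S - 1 / ((n : ℝ) + 1))) ∪ Ioi (sInf S))) := by
    refine aestronglyMeasurable_union_iff.2 ⟨aestronglyMeasurable_iUnion_iff.2 hbelow, ?_⟩
    refine (aestronglyMeasurable_const (b := G 0)).congr ?_
    filter_upwards [ae_restrict_mem measurableSet_Ioi] with s hs
    exact (habove s hs).symm
  have h2 : AEStronglyMeasurable G (volume.restrict (Ioc 0 t)) := by
    refine h1.mono_measure ?_ |>.congr EventuallyEq.rfl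
    refine Measure.restrict_mono' ?_ le_rfl
    have hne : ∀ᵐ s : ℝ, s ≠ sInf S := by simp [ae_iff]
    filter_upwards [hne] with s hs hs'
    rcases lt_or_gt_of_ne hs with h3 | h3
    · left
      obtain ⟨n, hn⟩ := exists_nat_one_div_lt (sub_pos.2 h3)
      refine mem_iUnion.2 ⟨n, hs'.1, ?_⟩
      linarith
    · exact Or.inr h3
  refine hbad ((intervalIntegrable_iff_integrableOn_Ioc_of_le ht).2 ?_)
  exact Integrable.of_bound h2 c' (Eventually.of_forall hc')

lemma sub_eq (h : IsFlow m c β μ) {φ : Ed d → ℝ} (hφ : IsTestFun φ) {s t : ℝ} (hs : 0 ≤ s)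
    (ht : 0 ≤ t) : ∫ x, φ x ∂(μ t) - ∫ x, φ x ∂(μ s) =
      ∫ u in s..t, ∫ x, LopI (β u) φ x ∂(μ u) := by
  have h1 := h.eqn φ hφ t ht
  have h2 := h.eqn φ hφ s hs
  rw [← intervalIntegral.integral_interval_sub_left (h.intervalIntegrable hφ ht)
    (h.intervalIntegrable hφ hs)]
  linarith

lemma continuous_integral (h : IsFlow m c β μ) {φ : Ed d → ℝ} (hφ : IsTestFun φ) :
    Continuous fun s => ∫ x, φ x ∂(μ s) := by
  obtain ⟨c', hc0, hc'⟩ := h.exists_bound hφ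
  have hmax : ∀ s, μ s = μ (max s 0) := by
    intro s
    rcases le_total s 0 with hs | hs
    · rw [max_eq_right hs, h.frozen s hs]
    · rw [max_eq_left hs]
  refine (LipschitzWith.of_dist_le_mul (K := c'.toNNReal) fun s t => ?_).continuous
  rw [hmax s, hmax t, Real.dist_eq, h.sub_eq hφ (le_max_right _ _) (le_max_right _ _),
    ← Real.norm_eq_abs, Real.coe_toNNReal _ hc0]
  refine (intervalIntegral.norm_integral_le_of_norm_le_const (C := c') fun u _ => hc' u).trans ?_
  gcongr
  exact abs_max_sub_max_le_abs _ _ _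

lemma measurable (h : IsFlow m c β μ) : Measurable μ := by
  have hp := h.prob
  have hcomp : ∀ K : Set (Ed d), IsCompact K → Measurable fun s => μ s K := by
    intro K hK
    choose g hg hg0 hg1 hgK hgU using fun n : ℕ => exists_testFun_cutoff hK
      (isOpen_thickening (δ := 1 / ((n : ℝ) + 1)) (E := K))
      (self_subset_thickening (by positivity) K)
    have hlim : ∀ s, Tendsto (fun n => ∫ x, g n x ∂(μ s)) atTop (𝓝 ((μ s).real K)) := by
      intro s
      rw [← integral_indicator_one hK.measurableSet]
      refine tendsto_integral_of_dominated_convergence (fun _ => 1)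
        (fun n => (hg n).continuous.aestronglyMeasurable) (integrable_const _)
        (fun n => Eventually.of_forall fun x => ?_) (Eventually.of_forall fun x => ?_)
      · rw [Real.norm_eq_abs, abs_of_nonneg (hg0 n x)]; exact hg1 n x
      · by_cases hx : x ∈ K
        · simp [hx, hgK]
        · rw [indicator_of_notMem hx]
          have hpos : 0 < infDist x K ∨ K = ∅ := by
            rcases K.eq_empty_or_nonempty with h | h
            · exact Or.inr h
            · exact Or.inl ((hK.isClosed.notMem_iff_infDist_pos h).1 hx)
          refine tendsto_const_nhds.congr' ?_
          rcases hpos with hpos | rfl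
          · filter_upwards [(tendsto_one_div_add_atTop_nhds_zero_nat (𝕜 := ℝ)).eventually_lt_const
              hpos] with n hn
            refine (hgU n x fun hcon => ?_).symm
            obtain ⟨z, hz, hxz⟩ := mem_thickening_iff.1 hcon
            linarith [infDist_le_dist_of_mem (x := x) hz]
          · exact Eventually.of_forall fun n => (hgU n x (by simp)).symm
    have hm : Measurable fun s => (μ s).real K :=
      measurable_of_tendsto_metrizable (fun n => (h.continuous_integral (hg n)).measurable)
        (tendsto_pi_nhds.2 hlim)
    simpa [ofReal_measureReal] using hm.ennreal_ofReal
  refine Measurable.measure_of_isPiSystem_of_isProbabilityMeasure (S := {s | IsClosed s})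
    ((BorelSpace.measurable_eq (α := Ed d)).trans borel_eq_generateFrom_isClosed)
    isPiSystem_isClosed fun F hF => ?_
  have hF' : ∀ s, μ s F = ⨆ n : ℕ, μ s (F ∩ closedBall 0 n) := by
    intro s
    rw [← Monotone.measure_iUnion, ← inter_iUnion, iUnion_closedBall_nat, inter_univ]
    exact fun i j hij => inter_subset_inter_right _ (closedBall_subset_closedBall
      (by exact_mod_cast hij))
  simp_rw [hF']
  exact Measurable.iSup fun n => hcomp _ ((isCompact_closedBall _ _).inter_left hF)

end IsFlow

lemma one_add_norm_sq_rpow_le {p : ℝ} (hp : 0 ≤ p) (x : Ed d) :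
    (1 + ‖x‖ ^ 2) ^ (p / 2) ≤ (1 + ‖x‖) ^ p := by
  have hx := norm_nonneg x
  calc (1 + ‖x‖ ^ 2) ^ (p / 2) ≤ ((1 + ‖x‖) ^ (2 : ℝ)) ^ (p / 2) := by
        refine Real.rpow_le_rpow (by positivity) ?_ (by positivity)
        rw [Real.rpow_two]; nlinarith
    _ = (1 + ‖x‖) ^ p := by
        rw [← Real.rpow_mul (by positivity)]; congr 1; ring

lemma one_add_norm_rpow_le {p : ℝ} (hp : 0 ≤ p) (x : Ed d) :
    (1 + ‖x‖) ^ p ≤ 2 ^ (p / 2) * (1 + ‖x‖ ^ 2) ^ (p / 2) := by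
  have hx := norm_nonneg x
  calc (1 + ‖x‖) ^ p = ((1 + ‖x‖) ^ (2 : ℝ)) ^ (p / 2) := by
        rw [← Real.rpow_mul (by positivity)]; congr 1; ring
    _ ≤ (2 * (1 + ‖x‖ ^ 2)) ^ (p / 2) := by
        refine Real.rpow_le_rpow (by positivity) ?_ (by positivity)
        rw [Real.rpow_two]; nlinarith [sq_nonneg (1 - ‖x‖)]
    _ = _ := Real.mul_rpow (by norm_num) (by positivity)

lemma continuous_one_add_norm_sq_rpow (p : ℝ) :
    Continuous fun x : Ed d => (1 + ‖x‖ ^ 2) ^ p :=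
  (continuous_const.add (continuous_norm.pow 2)).rpow_const fun x => Or.inl
    (by positivity : (0 : ℝ) < 1 + ‖x‖ ^ 2).ne'

lemma inner_self_le_of_dissipative {κ c m : ℝ} {B : Ed d → Ed d}
    (hgrow : ∀ x, ‖B x‖ ≤ c * (1 + ‖x‖) ^ m)
    (hB : ∀ x y, ⟪x - y, B x - B y⟫ ≤ -κ * ‖x - y‖ ^ 2) (x : Ed d) :
    ⟪x, B x⟫ ≤ -κ * ‖x‖ ^ 2 + c * ‖x‖ := by
  have h1 := hB x 0
  have h2 : ‖B 0‖ ≤ c := by simpa using hgrow 0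
  have h3 := real_inner_le_norm x (B 0)
  simp only [sub_zero, inner_sub_right] at h1
  nlinarith [mul_le_mul_of_nonneg_left h2 (norm_nonneg x)]

lemma integrable_one_add_norm_rpow_of_le {M : Measure (Ed d)} {p q : ℝ} (hpq : p ≤ q)
    (hq : Integrable (fun x => (1 + ‖x‖) ^ q) M) : Integrable (fun x => (1 + ‖x‖) ^ p) M := by
  refine hq.mono' (continuous_one_add_norm_rpow p).aestronglyMeasurable
    (Eventually.of_forall fun x => ?_)
  have hx := norm_nonneg x
  rw [Real.norm_of_nonneg (by positivity)]
  exact Real.rpow_le_rpow_of_exponent_le (by linarith) hpq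

namespace IsFlow

variable {m c : ℝ} {β : ℝ → Ed d → Ed d} {μ : ℝ → Measure (Ed d)}

lemma exists_moment_bound (h : IsFlow m c β μ) {κ : ℝ} (hκ : 0 < κ)
    (hdiss : ∀ s x y, ⟪x - y, β s x - β s y⟫ ≤ -κ * ‖x - y‖ ^ 2)
    (hmom : ∀ s, Integrable (fun x => (1 + ‖x‖) ^ (m + 1)) (μ s)) {T : ℝ} (hT : 0 ≤ T) :
    ∃ Q, 0 ≤ Q ∧ ∀ s, s ≤ T → ∫ x, (1 + ‖x‖) ^ (m + 1) ∂(μ s) ≤ Q := by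
  have hm := h.one_le
  have hp := h.prob
  set F : Ed d → ℝ := fun x => (1 + ‖x‖ ^ 2) ^ ((m + 1) / 2) with hF
  have hF0 : ∀ x, 0 ≤ F x := fun x => by positivity
  have hFc : Continuous F := continuous_one_add_norm_sq_rpow _
  have hFi : ∀ s, Integrable F (μ s) := fun s =>
    (hmom s).mono' hFc.aestronglyMeasurable (Eventually.of_forall fun x => by
      rw [Real.norm_of_nonneg (hF0 x)]
      exact one_add_norm_sq_rpow_le (by linarith) x)
  obtain ⟨K0, hK0, hly⟩ := exists_lyapunov_testFun (d := d) (q := (m + 1) / 2) (c := c)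
    (by linarith) hκ
  choose φ a hφ hφ0 hφF hφN hφL using fun n : ℕ => hly ((n : ℝ) + 1) (by
    have : (0 : ℝ) ≤ n := by positivity
    linarith)
  have key : ∀ s, 0 ≤ s → s ≤ T → ∫ x, F x ∂(μ s) ≤ ∫ x, F x ∂(μ 0) + K0 * T := by
    intro s hs hsT
    have hlim : Tendsto (fun n => ∫ x, (φ n x + a n) ∂(μ s)) atTop (𝓝 (∫ x, F x ∂(μ s))) := by
      refine tendsto_integral_of_dominated_convergence F
        (fun n => ((hφ n).continuous.add continuous_const).aestronglyMeasurable) (hFi s)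
        (fun n => Eventually.of_forall fun x => ?_) (Eventually.of_forall fun x => ?_)
      · rw [Real.norm_of_nonneg (hφ0 n x)]; exact hφF n x
      · refine tendsto_const_nhds.congr' ?_
        filter_upwards [(tendsto_natCast_atTop_atTop (R := ℝ)).eventually_ge_atTop (F x)] with n hn
        exact (hφN n x (by simp only [hF] at hn; linarith)).symm
    refine le_of_tendsto hlim (Eventually.of_forall fun n => ?_)
    have h1 := h.sub_eq (hφ n) le_rfl hs
    have h2 : ∫ u in (0 : ℝ)..s, ∫ x, LopI (β u) (φ n) x ∂(μ u) ≤ ∫ u in (0 : ℝ)..s, K0 := by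
      refine intervalIntegral.integral_mono_on hs (h.intervalIntegrable (hφ n) hs)
        intervalIntegrable_const fun u _ => ?_
      calc ∫ x, LopI (β u) (φ n) x ∂(μ u) ≤ ∫ _, K0 ∂(μ u) :=
            integral_mono (h.LopI_integrable (hφ n) u) (integrable_const _) (hφL n (β u)
              (inner_self_le_of_dissipative (h.grow u) (hdiss u)))
        _ = K0 := by simp
    have h3 : ∫ x, (φ n x + a n) ∂(μ 0) ≤ ∫ x, F x ∂(μ 0) :=
      integral_mono (((hφ n).integrable _).add (integrable_const _)) (hFi 0) (hφF n)
    rw [integral_add ((hφ n).integrable _) (integrable_const _)] at h3 ⊢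
    simp only [integral_const, probReal_univ, smul_eq_mul, one_mul,
      intervalIntegral.integral_const, sub_zero] at h2 h3 ⊢
    nlinarith
  have hpos : 0 ≤ ∫ x, F x ∂(μ 0) := integral_nonneg hF0
  refine ⟨2 ^ ((m + 1) / 2) * (∫ x, F x ∂(μ 0) + K0 * T), by positivity, fun s hs => ?_⟩
  have h4 : ∫ x, F x ∂(μ s) ≤ ∫ x, F x ∂(μ 0) + K0 * T := by
    rcases le_total 0 s with h0 | h0
    · exact key s h0 hs
    · rw [h.frozen s h0]; linarith [mul_nonneg hK0 hT]
  calc ∫ x, (1 + ‖x‖) ^ (m + 1) ∂(μ s) ≤ ∫ x, 2 ^ ((m + 1) / 2) * F x ∂(μ s) :=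
        integral_mono (hmom s) ((hFi s).const_mul _) (one_add_norm_rpow_le (by linarith))
    _ ≤ _ := by
        rw [integral_const_mul]
        gcongr

/-- The time average (without normalization) of a flow over `(0, T]`. -/
def occupation (h : IsFlow m c β μ) (T : ℝ) : Measure (Ed d) :=
  Measure.bind (volume.restrict (Ioc 0 T)) (⟨μ, h.measurable⟩ : ProbabilityTheory.Kernel ℝ (Ed d))

lemma isMarkovKernel (h : IsFlow m c β μ) :
    ProbabilityTheory.IsMarkovKernel
      (⟨μ, h.measurable⟩ : ProbabilityTheory.Kernel ℝ (Ed d)) := ⟨h.prob⟩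

lemma isFiniteMeasure_occupation (h : IsFlow m c β μ) (T : ℝ) :
    IsFiniteMeasure (h.occupation T) := by
  have := h.isMarkovKernel
  unfold occupation
  infer_instance

lemma integrable_occupation (h : IsFlow m c β μ) {T Q : ℝ} {f : Ed d → ℝ} (hf : Continuous f)
    (hfi : ∀ s, Integrable f (μ s)) (hQ : ∀ s, s ≤ T → ∫ x, ‖f x‖ ∂(μ s) ≤ Q) :
    Integrable f (h.occupation T) := by
  have := h.isMarkovKernel
  refine (Measure.integrable_comp_iff hf.aestronglyMeasurable).2
    ⟨Eventually.of_forall hfi, ?_⟩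
  refine Measure.integrableOn_of_bounded (M := Q) (by simp) ?_ ?_
  · exact (hf.norm.stronglyMeasurable.integral_kernel (κ := ⟨μ, h.measurable⟩)).aestronglyMeasurable
  · filter_upwards [ae_restrict_mem measurableSet_Ioc] with s hs
    rw [Real.norm_of_nonneg (integral_nonneg fun x => norm_nonneg _)]
    exact hQ s hs.2

lemma integrable_integral (h : IsFlow m c β μ) {T : ℝ} {f : Ed d → ℝ}
    (hf : Integrable f (h.occupation T)) :
    IntegrableOn (fun s => ∫ x, f x ∂(μ s)) (Ioc 0 T) := by
  have := h.isMarkovKernel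
  have hf' : Integrable f (Measure.bind (volume.restrict (Ioc 0 T))
      (⟨μ, h.measurable⟩ : ProbabilityTheory.Kernel ℝ (Ed d))) := hf
  rw [Measure.comp_eq_comp_const_apply] at hf'
  simpa [IntegrableOn] using hf'.integral_comp

lemma integral_occupation (h : IsFlow m c β μ) {T : ℝ} {f : Ed d → ℝ}
    (hf : Integrable f (h.occupation T)) :
    ∫ x, f x ∂(h.occupation T) = ∫ s in Ioc 0 T, ∫ x, f x ∂(μ s) := by
  have := h.isMarkovKernel
  have hf' : Integrable f (Measure.bind (volume.restrict (Ioc 0 T))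
      (⟨μ, h.measurable⟩ : ProbabilityTheory.Kernel ℝ (Ed d))) := hf
  unfold occupation
  rw [Measure.comp_eq_comp_const_apply] at hf' ⊢
  simpa using ProbabilityTheory.Kernel.integral_comp hf'

end IsFlow

lemma abs_integral_fderiv_apply_le {M : Measure (Ed d)} {m c A Q : ℝ} {B : Ed d → Ed d}
    {φ : Ed d → ℝ} (hA : 0 ≤ A) (hφA : ∀ x, ‖fderiv ℝ φ x‖ ≤ A)
    (hgrow : ∀ x, ‖B x‖ ≤ c * (1 + ‖x‖) ^ m) (hM : Integrable (fun x => (1 + ‖x‖) ^ m) M)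
    (hQ : ∫ x, (1 + ‖x‖) ^ m ∂M ≤ Q) :
    |∫ x, fderiv ℝ φ x (B x) ∂M| ≤ A * (c * Q) := by
  have hc : 0 ≤ c := by simpa using (norm_nonneg _).trans (hgrow 0)
  calc |∫ x, fderiv ℝ φ x (B x) ∂M| ≤ ∫ x, A * (c * (1 + ‖x‖) ^ m) ∂M := by
        rw [← Real.norm_eq_abs]
        refine norm_integral_le_of_norm_le ((hM.const_mul c).const_mul A)
          (Eventually.of_forall fun x => ?_)
        exact ((fderiv ℝ φ x).le_opNorm _).trans
          (mul_le_mul (hφA x) (hgrow x) (norm_nonneg _) hA)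
    _ ≤ A * (c * Q) := by
        rw [integral_const_mul, integral_const_mul]
        gcongr

lemma integral_LopI_eq {M : Measure (Ed d)} [IsFiniteMeasure M] {m c : ℝ} {B : Ed d → Ed d}
    (hB : Measurable B) {φ : Ed d → ℝ} (hφ : IsTestFun φ)
    (hgrow : ∀ x, ‖B x‖ ≤ c * (1 + ‖x‖) ^ m) :
    ∫ x, LopI B φ x ∂M = ∫ x, lap φ x ∂M + ∫ x, fderiv ℝ φ x (B x) ∂M := by
  obtain ⟨c', _, hc'⟩ := exists_LopI_bound hφ c m
  have h1 : Integrable (LopI B φ) M :=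
    Integrable.of_bound (LopI_measurable hB hφ).aestronglyMeasurable c'
      (Eventually.of_forall (hc' _ hgrow))
  have h2 : Integrable (fun x => fderiv ℝ φ x (B x)) M := by
    refine (h1.sub (hφ.lap.integrable M)).congr (Eventually.of_forall fun x => ?_)
    simp [LopI_eq]
  rw [← integral_add (hφ.lap.integrable M) h2]
  simp [LopI_eq]

lemma absolutelyContinuous_of_stationary (hd : 0 < d) {σ : Measure (Ed d)} [IsFiniteMeasure σ]
    {m c : ℝ} {B : Ed d → Ed d} (hB : Measurable B) (hgrow : ∀ x, ‖B x‖ ≤ c * (1 + ‖x‖) ^ m)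
    (hmom : Integrable (fun x => (1 + ‖x‖) ^ m) σ) (hσ : IsStationarySolI B σ) :
    σ ≪ volume := by
  have hc : 0 ≤ c := by simpa using (norm_nonneg _).trans (hgrow 0)
  have hQ : 0 ≤ ∫ x : Ed d, (1 + ‖x‖) ^ m ∂σ := integral_nonneg fun x => by positivity
  refine absolutelyContinuous_of_lap_bound hd (K0 := c * ∫ x, (1 + ‖x‖) ^ m ∂σ) (by positivity)
    fun φ hφ A₀ A₁ hA₀ hA₁ _ h1 => ?_
  have h2 := hσ φ hφ
  rw [integral_LopI_eq hB hφ hgrow] at h2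
  have h3 := abs_integral_fderiv_apply_le hA₁ h1 hgrow hmom le_rfl
  rw [eq_neg_of_add_eq_zero_left h2, abs_neg]
  refine h3.trans ?_
  nlinarith [mul_nonneg hc hQ]

namespace IsFlow

variable {m c : ℝ} {β : ℝ → Ed d → Ed d} {μ : ℝ → Measure (Ed d)}

lemma absolutelyContinuous_occupation (h : IsFlow m c β μ) (hd : 0 < d) {T Q : ℝ} (hT : 0 ≤ T)
    (hmom : ∀ s, Integrable (fun x => (1 + ‖x‖) ^ m) (μ s)) (hQ0 : 0 ≤ Q)
    (hQ : ∀ s, s ≤ T → ∫ x, (1 + ‖x‖) ^ m ∂(μ s) ≤ Q) :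
    h.occupation T ≪ volume := by
  have hp := h.prob
  have hc : 0 ≤ c := by simpa using (norm_nonneg _).trans (h.grow 0 0)
  have hfin := h.isFiniteMeasure_occupation T
  refine absolutelyContinuous_of_lap_bound hd (K0 := 2 + c * Q * T) (by positivity)
    fun φ hφ A₀ A₁ hA₀ hA₁ h0 h1 => ?_
  have hlap := hφ.lap.integrable (h.occupation T)
  rw [h.integral_occupation hlap]
  have hG := h.intervalIntegrable hφ hT
  rw [intervalIntegrable_iff_integrableOn_Ioc_of_le hT] at hG
  have h2 : ∀ s, |∫ x, φ x ∂(μ s)| ≤ A₀ := fun s => by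
    simpa using! norm_integral_le_of_norm_le_const (μ := μ s) (f := φ) (Eventually.of_forall h0)
  have h3 := h.sub_eq hφ le_rfl hT
  rw [intervalIntegral.integral_of_le hT] at h3
  have h4 : ‖∫ s in Ioc 0 T, (∫ x, lap φ x ∂(μ s) - ∫ x, LopI (β s) φ x ∂(μ s))‖ ≤
      A₁ * (c * Q) * volume.real (Ioc 0 T) := by
    refine norm_setIntegral_le_of_norm_le_const (by simp) fun s hs => ?_
    rw [integral_LopI_eq (h.meas s) hφ (h.grow s), sub_add_cancel_left, norm_neg]
    exact abs_integral_fderiv_apply_le hA₁ h1 (h.grow s) (hmom s) (hQ s hs.2)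
  rw [integral_sub (h.integrable_integral hlap) hG, ← h3] at h4
  simp only [Real.norm_eq_abs, volume_real_Ioc_of_le hT, sub_zero] at h4
  have h5 := abs_le.1 h4
  have h6 := abs_le.1 (h2 0)
  have h7 := abs_le.1 (h2 T)
  have h8 : 0 ≤ c * Q * T := by positivity
  have h9 : A₁ * (c * Q) * T = c * Q * T * A₁ := by ring
  have h10 := mul_nonneg h8 hA₀
  rw [abs_le]
  constructor <;> nlinarith

lemma exists_lipschitz_approx (h : IsFlow m c β μ) (hd : 0 < d) {κ T Q : ℝ} (hT : 0 ≤ T)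
    (hmom : ∀ s, Integrable (fun x => (1 + ‖x‖) ^ m) (μ s)) (hQ0 : 0 ≤ Q)
    (hQ : ∀ s, s ≤ T → ∫ x, (1 + ‖x‖) ^ m ∂(μ s) ≤ Q)
    {σ : Measure (Ed d)} [IsProbabilityMeasure σ] {b : Ed d → Ed d} (hb : Measurable b)
    (hgrow : ∀ x, ‖b x‖ ≤ c * (1 + ‖x‖) ^ m)
    (hdiss : ∀ x y, ⟪x - y, b x - b y⟫ ≤ -κ * ‖x - y‖ ^ 2)
    (hσm : Integrable (fun x => (1 + ‖x‖) ^ m) σ) (hσ : IsStationarySolI b σ)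
    {η : ℝ} (hη : 0 < η) :
    ∃ (B : Ed d → Ed d) (K : ℝ≥0), LipschitzWith K B ∧
      (∀ x y, ⟪x - y, B x - B y⟫ ≤ -κ * ‖x - y‖ ^ 2) ∧
      ∫ x, ‖b x - B x‖ ∂σ ≤ η ∧
      IntegrableOn (fun s => ∫ x, ‖b x - B x‖ ∂(μ s)) (Ioc 0 T) ∧
      ∫ s in Ioc 0 T, ∫ x, ‖b x - B x‖ ∂(μ s) ≤ η := by
  have hfin := h.isFiniteMeasure_occupation T
  have hac : σ + h.occupation T ≪ volume :=
    (absolutelyContinuous_of_stationary hd hb hgrow hσm hσ).add_left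
      (h.absolutelyContinuous_occupation hd hT hmom hQ0 hQ)
  have hocc : Integrable (fun x => (1 + ‖x‖) ^ m) (h.occupation T) := by
    refine h.integrable_occupation (Q := Q) (continuous_one_add_norm_rpow m) hmom fun s hs => ?_
    refine le_of_eq_of_le (integral_congr_ae (Eventually.of_forall fun x => ?_)) (hQ s hs)
    exact Real.norm_of_nonneg (by positivity)
  obtain ⟨B, K, hB, hBd, hi, hle⟩ := _root_.exists_lipschitz_approx hac h.one_le
    (hσm.add_measure hocc) hb hgrow hdiss hη
  have hi1 := (integrable_add_measure.1 hi).1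
  have hi2 := (integrable_add_measure.1 hi).2
  rw [integral_add_measure hi1 hi2, h.integral_occupation hi2] at hle
  have h1 : 0 ≤ ∫ x, ‖b x - B x‖ ∂σ := integral_nonneg fun x => norm_nonneg _
  have h2 : 0 ≤ ∫ s in Ioc 0 T, ∫ x, ‖b x - B x‖ ∂(μ s) :=
    integral_nonneg fun s => integral_nonneg fun x => norm_nonneg _
  exact ⟨B, K, hB, hBd, by linarith, h.integrable_integral hi2, by linarith⟩

end IsFlow

/-- A Gronwall inequality for the supremum of a family of Lipschitz functions of time. -/
lemma le_exp_mul_add_integral_of_isLUB {ι : Type*} {F D : ι → ℝ → ℝ} {W E : ℝ → ℝ}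
    {T c h l : ℝ} (hT : 0 ≤ T) (hh : 0 < h) (hl : 0 ≤ l)
    (hW : ∀ s, 0 ≤ s → s ≤ T → IsLUB (range fun i => F i s) (W s))
    (hD : ∀ i s t, 0 ≤ s → s ≤ t → t ≤ T → F i t - F i s = ∫ u in s..t, D i u)
    (hDi : ∀ i s t, 0 ≤ s → s ≤ t → t ≤ T → IntervalIntegrable (D i) volume s t)
    (hDc : ∀ i s, 0 ≤ s → s ≤ T → |D i s| ≤ c)
    (hE : IntegrableOn E (Ioc 0 T)) (hE0 : ∀ s, 0 ≤ E s)
    (hineq : ∀ i s, 0 ≤ s → s ≤ T → D i s ≤ (W s - F i s) / h - l * W s + E s) :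
    W T ≤ Real.exp (-l * T) * W 0 + ∫ s in (0 : ℝ)..T, E s := by
  have hFlip : ∀ i s t, 0 ≤ s → s ≤ t → t ≤ T → |F i t - F i s| ≤ c * (t - s) := by
    intro i s t hs hst htT
    rw [hD i s t hs hst htT, ← Real.norm_eq_abs, ← abs_of_nonneg (sub_nonneg.2 hst)]
    refine intervalIntegral.norm_integral_le_of_norm_le_const fun u hu => ?_
    rw [uIoc_of_le hst] at hu
    exact hDc i u (hs.trans hu.1.le) (hu.2.trans htT)
  have hFW : ∀ i s, 0 ≤ s → s ≤ T → F i s ≤ W s := fun i s hs hsT =>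
    (hW s hs hsT).1 (mem_range_self i)
  have hWlip : ∀ s t, 0 ≤ s → s ≤ t → t ≤ T → |W t - W s| ≤ c * (t - s) := by
    intro s t hs hst htT
    have h1 : W t ≤ W s + c * (t - s) := (hW t (hs.trans hst) htT).2 (by
      rintro _ ⟨i, rfl⟩
      have := (abs_le.1 (hFlip i s t hs hst htT)).2
      have := hFW i s hs (hst.trans htT)
      dsimp only
      linarith)
    have h2 : W s ≤ W t + c * (t - s) := (hW s hs (hst.trans htT)).2 (by
      rintro _ ⟨i, rfl⟩
      have := (abs_le.1 (hFlip i s t hs hst htT)).1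
      have := hFW i t (hs.trans hst) htT
      dsimp only
      linarith)
    rw [abs_le]
    constructor <;> linarith
  have hEi : ∀ s t, 0 ≤ s → s ≤ t → t ≤ T → IntervalIntegrable E volume s t := by
    intro s t hs hst htT
    rw [intervalIntegrable_iff_integrableOn_Ioc_of_le hst]
    exact hE.mono_set (Ioc_subset_Ioc hs htT)
  obtain ⟨g, hg⟩ : ∃ g : ℝ → ℝ, g = fun t => W t - ∫ s in (0 : ℝ)..t, E s := ⟨_, rfl⟩
  have hstep : ∀ t δ, 0 ≤ t → 0 < δ → t + δ ≤ T → g (t + δ) - g t ≤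
      -l * W t * δ + δ ^ 2 * (1 + l * c + (δ + 2 * c) / h) := by
    intro t δ ht hδ htT
    obtain ⟨_, ⟨i, rfl⟩, hi, -⟩ := (hW (t + δ) (by linarith) htT).exists_between
      (sub_lt_self (W (t + δ)) (pow_pos hδ 2))
    dsimp only at hi
    have h1 : ∀ s ∈ Icc t (t + δ), D i s ≤
        ((δ ^ 2 + 2 * c * δ) / h - l * W t + l * c * δ) + E s := by
      intro s hs
      have hs0 : 0 ≤ s := ht.trans hs.1
      have hsT : s ≤ T := hs.2.trans htT
      have hc0 : 0 ≤ c := (abs_nonneg _).trans (hDc i s hs0 hsT)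
      have h2 := abs_le.1 (hFlip i s (t + δ) hs0 hs.2 htT)
      have h3 := abs_le.1 (hWlip s (t + δ) hs0 hs.2 htT)
      have h4 := abs_le.1 (hWlip t s ht hs.1 hsT)
      have h5 : c * (t + δ - s) ≤ c * δ := mul_le_mul_of_nonneg_left (by linarith [hs.1]) hc0
      have h6 : c * (s - t) ≤ c * δ := mul_le_mul_of_nonneg_left (by linarith [hs.2]) hc0
      have h7 : (W s - F i s) / h ≤ (δ ^ 2 + 2 * c * δ) / h := by
        gcongr
        linarith
      have h8 : l * (W t - c * δ) ≤ l * W s := mul_le_mul_of_nonneg_left (by linarith) hl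
      have := hineq i s hs0 hsT
      nlinarith
    have h2 : ∫ s in t..(t + δ), D i s ≤
        ((δ ^ 2 + 2 * c * δ) / h - l * W t + l * c * δ) * δ + ∫ s in t..(t + δ), E s := by
      have hEi' := hEi t (t + δ) ht (by linarith) htT
      refine (intervalIntegral.integral_mono_on (by linarith)
        (hDi i t (t + δ) ht (by linarith) htT) (intervalIntegrable_const.add hEi') h1).trans ?_
      rw [intervalIntegral.integral_add intervalIntegrable_const hEi']
      simp only [intervalIntegral.integral_const, smul_eq_mul]
      linarith
    rw [← hD i t (t + δ) ht (by linarith) htT] at h2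
    have h3 := hFW i t ht (by linarith)
    have h4 := intervalIntegral.integral_add_adjacent_intervals (hEi 0 t le_rfl ht (by linarith))
      (hEi t (t + δ) ht (by linarith) htT)
    rw [hg]
    dsimp only
    rw [← h4]
    have h5 : ((δ ^ 2 + 2 * c * δ) / h - l * W t + l * c * δ) * δ =
      -l * W t * δ + δ ^ 2 * (l * c + (δ + 2 * c) / h) := by
      field_simp; ring
    linarith
  have hgc : ContinuousOn g (Icc 0 T) := by
    have hWc : ContinuousOn W (Icc 0 T) := by
      refine (LipschitzOnWith.of_dist_le_mul (K := c.toNNReal) fun s hs t ht => ?_).continuousOn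
      have hc0 : c ≤ c.toNNReal := Real.le_coe_toNNReal c
      rw [Real.dist_eq, Real.dist_eq]
      rcases le_total s t with hst | hst
      · rw [abs_sub_comm, abs_sub_comm s, abs_of_nonneg (sub_nonneg.2 hst)]
        exact (hWlip s t hs.1 hst ht.2).trans
          (mul_le_mul_of_nonneg_right hc0 (sub_nonneg.2 hst))
      · rw [abs_of_nonneg (sub_nonneg.2 hst)]
        exact (hWlip t s ht.1 hst hs.2).trans
          (mul_le_mul_of_nonneg_right hc0 (sub_nonneg.2 hst))
    rw [hg]
    refine hWc.sub ?_
    have := intervalIntegral.continuousOn_primitive_interval (μ := volume) (f := E) (a := 0)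
      (b := T) (by rwa [uIcc_of_le hT, integrableOn_Icc_iff_integrableOn_Ioc])
    rwa [uIcc_of_le hT] at this
  have hgr := le_gronwallBound_of_liminf_deriv_right_le (f := g) (f' := fun t => -l * W t)
    (δ := W 0) (K := -l) (ε := 0) (a := 0) (b := T) hgc ?_ ?_ ?_ T ⟨hT, le_rfl⟩
  · rw [gronwallBound_ε0, sub_zero] at hgr
    rw [hg] at hgr
    dsimp only at hgr
    linarith
  · intro t ht r hr
    have hlim : Tendsto (fun z => -l * W t + (z - t) * (1 + l * c + ((z - t) + 2 * c) / h))
        (𝓝[>] t) (𝓝 (-l * W t)) := by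
      have : Continuous fun z => -l * W t + (z - t) * (1 + l * c + ((z - t) + 2 * c) / h) := by
        fun_prop
      have := this.tendsto t
      simp only [sub_self, zero_mul, add_zero] at this
      exact this.mono_left nhdsWithin_le_nhds
    refine Eventually.frequently ?_
    filter_upwards [hlim.eventually_lt_const hr, self_mem_nhdsWithin,
      Ioc_mem_nhdsGT ht.2] with z hz hz1 hz2
    have hzt : 0 < z - t := sub_pos.2 hz1
    have h1 := hstep t (z - t) ht.1 hzt (by linarith [hz2.2])
    rw [add_sub_cancel] at h1
    refine lt_of_le_of_lt ?_ hz
    rw [inv_mul_le_iff₀ hzt]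
    refine h1.trans (le_of_eq ?_)
    ring
  · simp [hg]
  · intro t ht
    rw [hg]
    have : 0 ≤ ∫ s in (0 : ℝ)..t, E s := intervalIntegral.integral_nonneg ht.1 fun s _ => hE0 s
    dsimp only
    nlinarith

lemma LipschitzWith.integrable_of_norm {M : Measure (Ed d)} [IsFiniteMeasure M]
    (hM : Integrable (fun x => ‖x‖) M) {K : ℝ≥0} {f : Ed d → ℝ} (hf : LipschitzWith K f) :
    Integrable f M := by
  refine ((integrable_const |f 0|).add (hM.const_mul K)).mono'
    hf.continuous.aestronglyMeasurable (Eventually.of_forall fun x => ?_)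
  have h1 := hf.dist_le_mul x 0
  rw [dist_zero_right, Real.dist_eq] at h1
  have h2 := abs_add_le (f x - f 0) (f 0)
  rw [sub_add_cancel] at h2
  simp only [Pi.add_apply, Real.norm_eq_abs]
  linarith

lemma integral_sub_integral_le_of_lipschitz {μ ν : Measure (Ed d)} [IsProbabilityMeasure μ]
    [IsProbabilityMeasure ν] (hμ : Integrable (fun x => ‖x‖) μ)
    (hν : Integrable (fun x => ‖x‖) ν) {f : Ed d → ℝ} (hf : LipschitzWith 1 f) :
    ∫ x, f x ∂μ - ∫ x, f x ∂ν ≤ ∫ x, ‖x‖ ∂μ + ∫ x, ‖x‖ ∂ν := by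
  have hb : ∀ x, |f x - f 0| ≤ ‖x‖ := fun x => by
    simpa [Real.dist_eq] using hf.dist_le_mul x 0
  have h1 : ∫ x, f x ∂μ ≤ ∫ x, (f 0 + ‖x‖) ∂μ :=
    integral_mono (hf.integrable_of_norm hμ) ((integrable_const _).add hμ)
      fun x => by linarith [(abs_le.1 (hb x)).2]
  have h2 : ∫ x, (f 0 - ‖x‖) ∂ν ≤ ∫ x, f x ∂ν :=
    integral_mono ((integrable_const _).sub hν) (hf.integrable_of_norm hν)
      fun x => by linarith [(abs_le.1 (hb x)).1]
  rw [integral_add (integrable_const _) hμ] at h1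
  rw [integral_sub (integrable_const _) hν] at h2
  simp only [integral_const, probReal_univ, one_smul] at h1 h2
  linarith

lemma le_kant {μ ν : Measure (Ed d)} [IsProbabilityMeasure μ]
    [IsProbabilityMeasure ν] (hμ : Integrable (fun x => ‖x‖) μ)
    (hν : Integrable (fun x => ‖x‖) ν) {f : Ed d → ℝ} (hf : LipschitzWith 1 f) :
    ∫ x, f x ∂μ - ∫ x, f x ∂ν ≤ kant μ ν := by
  refine le_ciSup (f := fun f : {f : Ed d → ℝ // LipschitzWith 1 f} =>
    ∫ x, f.1 x ∂μ - ∫ x, f.1 x ∂ν) ⟨∫ x, ‖x‖ ∂μ + ∫ x, ‖x‖ ∂ν, ?_⟩ ⟨f, hf⟩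
  rintro _ ⟨g, rfl⟩
  exact integral_sub_integral_le_of_lipschitz hμ hν g.2

lemma kant_le {μ ν : Measure (Ed d)} {a : ℝ}
    (h : ∀ f : Ed d → ℝ, LipschitzWith 1 f → ∫ x, f x ∂μ - ∫ x, f x ∂ν ≤ a) : kant μ ν ≤ a := by
  have : Nonempty {f : Ed d → ℝ // LipschitzWith 1 f} := ⟨fun _ => 0, LipschitzWith.const' 0⟩
  exact ciSup_le fun f => h f.1 f.2

/-- Smooth probability densities supported in the ball of radius `ε`. -/
structure IsMollifier (ε : ℝ) (ψ : Ed d → ℝ) : Prop where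
  isTestFun : IsTestFun ψ
  nonneg : ∀ y, 0 ≤ ψ y
  integral_eq_one : ∫ y, ψ y = 1
  norm_le : ∀ y, ψ y ≠ 0 → ‖y‖ ≤ ε

lemma exists_isMollifier (d : ℕ) {ε : ℝ} (hε : 0 < ε) : ∃ ψ : Ed d → ℝ, IsMollifier ε ψ := by
  refine ⟨(stdBump d ε hε).normed volume, ⟨(stdBump d ε hε).contDiff_normed,
    (stdBump d ε hε).hasCompactSupport_normed⟩, (stdBump d ε hε).nonneg_normed,
    (stdBump d ε hε).integral_normed, fun y hy => ?_⟩
  have : y ∈ Function.support ((stdBump d ε hε).normed volume) := hy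
  rw [(stdBump d ε hε).support_normed_eq] at this
  exact (mem_ball_zero_iff.1 this).le

namespace IsMollifier

variable {ε : ℝ} {ψ : Ed d → ℝ}

lemma integral_abs (h : IsMollifier ε ψ) : ∫ y, |ψ y| = 1 := by
  simp_rw [abs_of_nonneg (h.nonneg _)]
  exact h.integral_eq_one

lemma lipschitz (h : IsMollifier ε ψ) {f : Ed d → ℝ} {K : ℝ≥0} (hf : LipschitzWith K f) :
    LipschitzWith K (moll ψ f) :=
  LipschitzWith.of_dist_le_mul fun x y => by
    have := moll_lipschitz h.isTestFun hf x y
    rwa [h.integral_abs, one_mul, ← dist_eq_norm] at this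

lemma abs_moll_sub_le (h : IsMollifier ε ψ) {f g : Ed d → ℝ} (hf : Continuous f)
    (hg : Continuous g) {x : Ed d} {a b : ℝ}
    (hfg : ∀ y, ‖y‖ ≤ ε → |f (x - y) - g (x - y) - b| ≤ a) :
    |moll ψ f x - moll ψ g x - b| ≤ a := by
  have hi := h.isTestFun.integrable (volume : Measure (Ed d))
  have h1 : moll ψ f x - moll ψ g x - b = ∫ y, (f (x - y) - g (x - y) - b) * ψ y := by
    have e : ∀ y, (f (x - y) - g (x - y) - b) * ψ y =
      f (x - y) * ψ y - g (x - y) * ψ y - b * ψ y := fun y => by ring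
    simp_rw [e]
    have hs : Integrable fun y => f (x - y) * ψ y - g (x - y) * ψ y :=
      (moll_integrable h.isTestFun hf x).sub (moll_integrable h.isTestFun hg x)
    rw [integral_sub hs (hi.const_mul b), integral_sub (moll_integrable h.isTestFun hf x)
      (moll_integrable h.isTestFun hg x), integral_const_mul, h.integral_eq_one, moll_apply,
      moll_apply, mul_one]
  rw [h1, ← Real.norm_eq_abs]
  calc ‖∫ y, (f (x - y) - g (x - y) - b) * ψ y‖ ≤ ∫ y, a * ψ y := by
        refine norm_integral_le_of_norm_le (hi.const_mul a) (Eventually.of_forall fun y => ?_)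
        rw [norm_mul, Real.norm_of_nonneg (h.nonneg y)]
        by_cases hy : ψ y = 0
        · simp [hy]
        · exact mul_le_mul_of_nonneg_right (hfg y (h.norm_le y hy)) (h.nonneg y)
    _ = a := by rw [integral_const_mul, h.integral_eq_one, mul_one]

lemma abs_moll_sub_self_le (h : IsMollifier ε ψ) {f : Ed d → ℝ} (hf : LipschitzWith 1 f)
    (x : Ed d) : |moll ψ f x - f x| ≤ ε := by
  have h0 : moll ψ (fun _ => 0) x = 0 := by simp [moll_apply]
  have := h.abs_moll_sub_le (x := x) (b := f x) (a := ε) hf.continuous continuous_const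
    (g := fun _ => 0) (fun y hy => ?_)
  · rwa [h0, sub_zero] at this
  · have := hf.dist_le_mul (x - y) x
    simp only [NNReal.coe_one, one_mul, dist_eq_norm, sub_sub_cancel_left,
      norm_neg] at this
    rw [sub_zero]
    exact this.trans hy

end IsMollifier

/-- Cutting a Lipschitz function off at the cone `(n - ‖x‖)⁺`. -/
def coneCut (n : ℕ) (f : Ed d → ℝ) (x : Ed d) : ℝ :=
  max (-max (n - ‖x‖) 0) (min (f x) (max (n - ‖x‖) 0))

lemma coneCut_lipschitz (n : ℕ) {f : Ed d → ℝ} (hf : LipschitzWith 1 f) :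
    LipschitzWith 1 (coneCut n f) := by
  have h1 : LipschitzWith 1 fun x : Ed d => max ((n : ℝ) - ‖x‖) 0 := by
    refine LipschitzWith.max_const ?_ 0
    simpa using (LipschitzWith.const (n : ℝ)).sub (lipschitzWith_one_norm (E := Ed d))
  have := h1.neg.max (hf.min h1)
  simpa using! this

lemma coneCut_hasCompactSupport (n : ℕ) (f : Ed d → ℝ) : HasCompactSupport (coneCut n f) := by
  refine HasCompactSupport.intro (isCompact_closedBall (0 : Ed d) n) fun x hx => ?_
  have : max ((n : ℝ) - ‖x‖) 0 = 0 := max_eq_right (by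
    rw [mem_closedBall_zero_iff, not_le] at hx
    linarith)
  simp [coneCut, this]

lemma abs_coneCut_le (n : ℕ) (f : Ed d → ℝ) (x : Ed d) : |coneCut n f x| ≤ |f x| := by
  have h : 0 ≤ max ((n : ℝ) - ‖x‖) 0 := le_max_right _ _
  unfold coneCut
  grind

lemma coneCut_eq {n : ℕ} {f : Ed d → ℝ} {x : Ed d} (h : |f x| + ‖x‖ ≤ n) :
    coneCut n f x = f x := by
  have h1 : max ((n : ℝ) - ‖x‖) 0 = n - ‖x‖ := max_eq_left (by linarith [abs_nonneg (f x)])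
  have := abs_le.1 (show |f x| ≤ n - ‖x‖ by linarith)
  rw [coneCut, h1, min_eq_left this.2, max_eq_right this.1]

lemma IsMollifier.tendsto_moll_coneCut {ε : ℝ} {ψ : Ed d → ℝ} (h : IsMollifier ε ψ)
    {f : Ed d → ℝ} (hf : LipschitzWith 1 f) (hf0 : f 0 = 0) (x : Ed d) :
    Tendsto (fun n : ℕ => moll ψ (coneCut n f) x) atTop (𝓝 (moll ψ f x)) := by
  refine tendsto_const_nhds.congr' ?_
  filter_upwards [(tendsto_natCast_atTop_atTop (R := ℝ)).eventually_ge_atTop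
    (2 * (‖x‖ + ε))] with n hn
  rw [moll_apply, moll_apply]
  refine integral_congr_ae (Eventually.of_forall fun y => ?_)
  by_cases hy : ψ y = 0
  · simp [hy]
  · have h1 : |f (x - y)| ≤ ‖x - y‖ := by simpa [Real.dist_eq, hf0] using hf.dist_le_mul (x - y) 0
    have h2 := norm_sub_le x y
    have h3 := h.norm_le y hy
    dsimp only
    rw [coneCut_eq (by linarith)]

/-- The Kantorovich distance of the mollified measures, as a supremum over mollified compactly
supported `1`-Lipschitz functions. -/
def mollKant (ψ : Ed d → ℝ) (μ ν : Measure (Ed d)) : ℝ :=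
  ⨆ f : {f : Ed d → ℝ // LipschitzWith 1 f ∧ HasCompactSupport f},
    (∫ x, moll ψ f.1 x ∂μ - ∫ x, moll ψ f.1 x ∂ν)

namespace IsMollifier

variable {ε : ℝ} {ψ : Ed d → ℝ} {μ ν : Measure (Ed d)} [IsProbabilityMeasure μ]
  [IsProbabilityMeasure ν]

lemma isLUB_mollKant (h : IsMollifier ε ψ) (hμ : Integrable (fun x => ‖x‖) μ)
    (hν : Integrable (fun x => ‖x‖) ν) :
    IsLUB (range fun f : {f : Ed d → ℝ // LipschitzWith 1 f ∧ HasCompactSupport f} =>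
      ∫ x, moll ψ f.1 x ∂μ - ∫ x, moll ψ f.1 x ∂ν) (mollKant ψ μ ν) := by
  have : Nonempty {f : Ed d → ℝ // LipschitzWith 1 f ∧ HasCompactSupport f} :=
    ⟨fun _ => 0, LipschitzWith.const' 0, HasCompactSupport.zero⟩
  refine isLUB_ciSup ⟨kant μ ν, ?_⟩
  rintro _ ⟨f, rfl⟩
  exact le_kant hμ hν (h.lipschitz f.2.1)

lemma mollKant_le_kant (h : IsMollifier ε ψ) (hμ : Integrable (fun x => ‖x‖) μ)
    (hν : Integrable (fun x => ‖x‖) ν) : mollKant ψ μ ν ≤ kant μ ν := by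
  refine (h.isLUB_mollKant hμ hν).2 ?_
  rintro _ ⟨f, rfl⟩
  exact le_kant hμ hν (h.lipschitz f.2.1)

lemma integral_moll_sub_le (h : IsMollifier ε ψ) (hμ : Integrable (fun x => ‖x‖) μ)
    (hν : Integrable (fun x => ‖x‖) ν) {f : Ed d → ℝ} (hf : LipschitzWith 1 f) :
    ∫ x, moll ψ f x ∂μ - ∫ x, moll ψ f x ∂ν ≤ mollKant ψ μ ν := by
  wlog hf0 : f 0 = 0 generalizing f
  · have hg : LipschitzWith 1 fun x => f x - f 0 := by
      simpa using hf.sub (LipschitzWith.const (f 0))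
    have h1 := this hg (sub_self _)
    have h2 : ∀ x, moll ψ (fun x => f x - f 0) x = moll ψ f x - f 0 := by
      intro x
      simp_rw [moll_apply, sub_mul]
      rw [integral_sub (moll_integrable h.isTestFun hf.continuous x)
        ((h.isTestFun.integrable _).const_mul _), integral_const_mul, h.integral_eq_one, mul_one]
    have hi : ∀ M : Measure (Ed d), IsProbabilityMeasure M → Integrable (fun x => ‖x‖) M →
        ∫ x, moll ψ (fun x => f x - f 0) x ∂M = ∫ x, moll ψ f x ∂M - f 0 := by
      intro M _ hM
      simp_rw [h2]
      rw [integral_sub ((h.lipschitz hf).integrable_of_norm hM) (integrable_const _)]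
      simp
    rw [hi μ inferInstance hμ, hi ν inferInstance hν] at h1
    linarith
  have hlim : ∀ M : Measure (Ed d), IsProbabilityMeasure M → Integrable (fun x => ‖x‖) M →
      Tendsto (fun n : ℕ => ∫ x, moll ψ (coneCut n f) x ∂M) atTop (𝓝 (∫ x, moll ψ f x ∂M)) := by
    intro M _ hM
    refine tendsto_integral_of_dominated_convergence (fun x => ‖x‖ + ε)
      (fun n => (h.lipschitz (coneCut_lipschitz n hf)).continuous.aestronglyMeasurable)
      (hM.add (integrable_const _)) (fun n => Eventually.of_forall fun x => ?_)
      (Eventually.of_forall (h.tendsto_moll_coneCut hf hf0))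
    have h1 := h.abs_moll_sub_self_le (coneCut_lipschitz n hf) x
    have h2 := abs_coneCut_le n f x
    have h3 : |f x| ≤ ‖x‖ := by simpa [Real.dist_eq, hf0] using hf.dist_le_mul x 0
    have h4 := abs_add_le (moll ψ (coneCut n f) x - coneCut n f x) (coneCut n f x)
    rw [sub_add_cancel] at h4
    rw [Real.norm_eq_abs]
    linarith
  refine le_of_tendsto ((hlim μ inferInstance hμ).sub (hlim ν inferInstance hν))
    (Eventually.of_forall fun n => ?_)
  exact (h.isLUB_mollKant hμ hν).1
    ⟨⟨coneCut n f, coneCut_lipschitz n hf, coneCut_hasCompactSupport n f⟩, rfl⟩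

lemma integral_moll_sub_le_mul (h : IsMollifier ε ψ) (hμ : Integrable (fun x => ‖x‖) μ)
    (hν : Integrable (fun x => ‖x‖) ν) {f : Ed d → ℝ} {r : ℝ} (hr : 0 < r)
    (hf : ∀ x y, |f x - f y| ≤ r * ‖x - y‖) :
    ∫ x, moll ψ f x ∂μ - ∫ x, moll ψ f x ∂ν ≤ r * mollKant ψ μ ν := by
  have hg : LipschitzWith 1 fun x => r⁻¹ * f x := LipschitzWith.of_dist_le_mul fun x y => by
    rw [Real.dist_eq, ← mul_sub, abs_mul, abs_of_pos (inv_pos.2 hr), inv_mul_le_iff₀ hr,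
      dist_eq_norm, NNReal.coe_one, one_mul]
    exact hf x y
  have h1 := h.integral_moll_sub_le hμ hν hg
  have h2 : ∀ x, moll ψ (fun x => r⁻¹ * f x) x = r⁻¹ * moll ψ f x := fun x => by
    simp_rw [moll_apply, mul_assoc]
    rw [integral_const_mul]
  simp_rw [h2, integral_const_mul] at h1
  rwa [← mul_sub, inv_mul_le_iff₀ hr] at h1

lemma kant_le_mollKant (h : IsMollifier ε ψ) (hμ : Integrable (fun x => ‖x‖) μ)
    (hν : Integrable (fun x => ‖x‖) ν) : kant μ ν ≤ mollKant ψ μ ν + 2 * ε := by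
  refine kant_le fun f hf => ?_
  have h1 := h.integral_moll_sub_le hμ hν hf
  have h2 := h.abs_moll_sub_self_le hf
  have h3 : ∫ x, f x ∂μ ≤ ∫ x, (moll ψ f x + ε) ∂μ :=
    integral_mono (hf.integrable_of_norm hμ)
      (((h.lipschitz hf).integrable_of_norm hμ).add (integrable_const _))
      fun x => by linarith [(abs_le.1 (h2 x)).1]
  have h4 : ∫ x, (moll ψ f x - ε) ∂ν ≤ ∫ x, f x ∂ν :=
    integral_mono (((h.lipschitz hf).integrable_of_norm hν).sub (integrable_const _))
      (hf.integrable_of_norm hν)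
      fun x => by linarith [(abs_le.1 (h2 x)).2]
  rw [integral_add ((h.lipschitz hf).integrable_of_norm hμ) (integrable_const _)] at h3
  rw [integral_sub ((h.lipschitz hf).integrable_of_norm hν) (integrable_const _)] at h4
  simp only [integral_const, probReal_univ, one_smul] at h3 h4
  linarith

end IsMollifier

lemma hasDerivAt_comp_add_smul {g : Ed d → ℝ} (hg : Differentiable ℝ g) (x v : Ed d) (t : ℝ) :
    HasDerivAt (fun t : ℝ => g (x + t • v)) (fderiv ℝ g (x + t • v) v) t := by
  have h1 : HasDerivAt (fun t : ℝ => x + t • v) v t := by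
    simpa using ((hasDerivAt_id t).smul_const v).const_add x
  exact (hg (x + t • v)).hasFDerivAt.comp_hasDerivAt t h1

lemma abs_add_sub_fderiv_le {g : Ed d → ℝ} (hg : Differentiable ℝ g) {c : ℝ}
    (hc : ∀ x y v, |fderiv ℝ g x v - fderiv ℝ g y v| ≤ c * ‖v‖ * ‖x - y‖) (x v : Ed d) :
    |g (x + v) - g x - fderiv ℝ g x v| ≤ c * ‖v‖ ^ 2 := by
  have hd : ∀ t ∈ Icc (0 : ℝ) 1, HasDerivWithinAt
      (fun t : ℝ => g (x + t • v) - t * fderiv ℝ g x v)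
      (fderiv ℝ g (x + t • v) v - fderiv ℝ g x v) (Icc 0 1) t := fun t _ => by
    simpa using ((hasDerivAt_comp_add_smul hg x v t).fun_sub
      ((hasDerivAt_id t).mul_const (fderiv ℝ g x v))).hasDerivWithinAt
  have := norm_image_sub_le_of_norm_deriv_le_segment' hd (C := c * ‖v‖ ^ 2) (fun t ht => ?_) 1
    (by simp)
  · simp only [one_smul, one_mul, zero_smul, add_zero, zero_mul, sub_zero, mul_one,
      Real.norm_eq_abs] at this
    rwa [sub_right_comm] at this
  · have h1 := hc (x + t • v) x v
    have h0 : 0 ≤ c * ‖v‖ * ‖v‖ := by simpa using (abs_nonneg _).trans (hc (x + v) x v)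
    rw [add_sub_cancel_left, norm_smul, Real.norm_of_nonneg ht.1] at h1
    refine h1.trans ?_
    nlinarith [ht.2]

lemma abs_second_difference_le {g : Ed d → ℝ} (hg : ContDiff ℝ (⊤ : ℕ∞) g) {c : ℝ} {i : Fin d}
    (hc : ∀ x y, |hess2 g x i i - hess2 g y i i| ≤ c * ‖x - y‖) (x : Ed d) {a : ℝ} (ha : 0 ≤ a) :
    |g (x + a • EuclideanSpace.single i 1) + g (x - a • EuclideanSpace.single i 1) - 2 * g x
      - a ^ 2 * hess2 g x i i| ≤ 2 * c * a ^ 3 := by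
  obtain ⟨e, he⟩ : ∃ e : Ed d, e = EuclideanSpace.single i 1 := ⟨_, rfl⟩
  have hen : ‖e‖ = 1 := by simp [he]
  rw [← he]
  have hgd : Differentiable ℝ g := hg.differentiable (by simp)
  have hg' : Differentiable ℝ fun y => fderiv ℝ g y e :=
    ((hg.fderiv_right (m := (⊤ : ℕ∞)) (by simp)).clm_apply contDiff_const).differentiable (by simp)
  have hH : ∀ y, hess2 g y i i = fderiv ℝ (fun z => fderiv ℝ g z e) y e := fun y => by
    rw [hess2_eq hg, he]
  simp_rw [hH] at hc ⊢
  set H : Ed d → ℝ := fun y => fderiv ℝ (fun z => fderiv ℝ g z e) y e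
  have hd : ∀ (k : Ed d → ℝ), Differentiable ℝ k → ∀ t : ℝ,
      HasDerivAt (fun t : ℝ => k (x - t • e)) (-fderiv ℝ k (x - t • e) e) t := by
    intro k hk t
    have := hasDerivAt_comp_add_smul hk x (-e) t
    simpa [← sub_eq_add_neg] using this
  have hq : ∀ t ∈ Icc 0 a, ‖(fderiv ℝ g (x + t • e) e - fderiv ℝ g (x - t • e) e - 2 * t * H x)‖
      ≤ 2 * c * a ^ 2 := by
    intro t ht
    have h1 : ∀ s ∈ Icc 0 a, HasDerivWithinAt
        (fun t : ℝ => fderiv ℝ g (x + t • e) e - fderiv ℝ g (x - t • e) e - 2 * t * H x)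
        (H (x + s • e) + H (x - s • e) - 2 * H x) (Icc 0 a) s := fun s _ => by
      have := ((hasDerivAt_comp_add_smul hg' x e s).fun_sub (hd _ hg' s)).fun_sub
        (((hasDerivAt_id s).const_mul 2).mul_const (H x))
      simpa using this.hasDerivWithinAt
    have h2 := norm_image_sub_le_of_norm_deriv_le_segment' h1 (C := 2 * c * a) (fun s hs => ?_) t ht
    · simp only [zero_smul, add_zero, sub_zero, sub_self, mul_zero, zero_mul] at h2
      refine h2.trans ?_
      have h0 : 0 ≤ c := by simpa [hen] using (abs_nonneg _).trans (hc (x + e) x)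
      nlinarith [mul_nonneg h0 ha, ht.2]
    · have h3 := hc (x + s • e) x
      have h4 := hc (x - s • e) x
      have h0 : 0 ≤ c := by simpa [hen] using (abs_nonneg _).trans (hc (x + e) x)
      simp only [add_sub_cancel_left, sub_sub_cancel_left, norm_neg, norm_smul, hen, mul_one,
        Real.norm_of_nonneg hs.1] at h3 h4
      have h5 := abs_add_le (H (x + s • e) - H x) (H (x - s • e) - H x)
      have h6 : H (x + s • e) - H x + (H (x - s • e) - H x) =
        H (x + s • e) + H (x - s • e) - 2 * H x := by ring
      rw [h6] at h5
      rw [Real.norm_eq_abs]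
      nlinarith [mul_le_mul_of_nonneg_left hs.2.le h0]
  have h1 : ∀ t ∈ Icc 0 a, HasDerivWithinAt
      (fun t : ℝ => g (x + t • e) + g (x - t • e) - 2 * g x - t ^ 2 * H x)
      (fderiv ℝ g (x + t • e) e - fderiv ℝ g (x - t • e) e - 2 * t * H x) (Icc 0 a) t := by
    intro t _
    have := (((hasDerivAt_comp_add_smul hgd x e t).fun_add
      (hd _ hgd t)).sub_const (2 * g x)).fun_sub
      (((hasDerivAt_id t).pow 2).mul_const (H x))
    simpa [← sub_eq_add_neg] using this.hasDerivWithinAt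
  have h2 := norm_image_sub_le_of_norm_deriv_le_segment' h1
    (fun t ht => hq t (Ico_subset_Icc_self ht)) a ⟨ha, le_rfl⟩
  simp only [zero_smul, add_zero, sub_zero, ne_eq, OfNat.ofNat_ne_zero, not_false_eq_true,
    zero_pow, zero_mul, Real.norm_eq_abs] at h2
  rw [show g x + g x - 2 * g x = 0 by ring, sub_zero] at h2
  refine h2.trans (le_of_eq ?_)
  ring

/-- One step of a Markov chain approximating the diffusion with drift `B`: with probability `1/2`
a symmetric jump of size `a` along a coordinate axis, otherwise a drift step of length
`2 * (a ^ 2 / (4 * d))`. -/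
def eulerStep (B : Ed d → Ed d) (a : ℝ) (f : Ed d → ℝ) (x : Ed d) : ℝ :=
  (∑ i, (f (x + a • EuclideanSpace.single i 1) + f (x - a • EuclideanSpace.single i 1))) / (4 * d)
    + f (x + (2 * (a ^ 2 / (4 * d))) • B x) / 2

lemma eulerStep_continuous {B : Ed d → Ed d} (hB : Continuous B) (a : ℝ) {f : Ed d → ℝ}
    (hf : Continuous f) : Continuous (eulerStep B a f) := by
  unfold eulerStep
  fun_prop

lemma norm_add_smul_sub_le {B : Ed d → Ed d} {K : ℝ≥0} (hB : LipschitzWith K B) {κ : ℝ}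
    (hdiss : ∀ x y, ⟪x - y, B x - B y⟫ ≤ -κ * ‖x - y‖ ^ 2) {h : ℝ} (hh : 0 ≤ h)
    (hκ : 2 * h * κ ≤ 1) (x y : Ed d) :
    ‖(x + (2 * h) • B x) - (y + (2 * h) • B y)‖ ≤
      (1 - 2 * h * κ + 2 * h ^ 2 * K ^ 2) * ‖x - y‖ := by
  have hK : ‖B x - B y‖ ≤ K * ‖x - y‖ := by simpa [dist_eq_norm] using hB.dist_le_mul x y
  have e : (x + (2 * h) • B x) - (y + (2 * h) • B y) = (x - y) + (2 * h) • (B x - B y) := by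
    module
  have hu : 0 ≤ 1 - 2 * h * κ + 2 * h ^ 2 * K ^ 2 := by
    have : 0 ≤ 2 * h ^ 2 * (K : ℝ) ^ 2 := by positivity
    linarith
  rw [e]
  refine le_of_sq_le_sq ?_ (by positivity)
  rw [norm_add_sq_real, norm_smul, inner_smul_right, Real.norm_of_nonneg (by positivity)]
  have h1 := mul_le_mul_of_nonneg_left (hdiss x y) (show 0 ≤ 4 * h by positivity)
  have h2 : ‖B x - B y‖ ^ 2 ≤ (K * ‖x - y‖) ^ 2 := by gcongr
  have h3 := mul_le_mul_of_nonneg_left h2 (show 0 ≤ 4 * h ^ 2 by positivity)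
  have h4 : 0 ≤ (2 * h * κ - 2 * h ^ 2 * K ^ 2) ^ 2 * ‖x - y‖ ^ 2 := by positivity
  nlinarith

lemma eulerStep_lipschitz (hd : 0 < d) {B : Ed d → Ed d} {K : ℝ≥0} (hB : LipschitzWith K B)
    {κ : ℝ} (hdiss : ∀ x y, ⟪x - y, B x - B y⟫ ≤ -κ * ‖x - y‖ ^ 2) {a : ℝ}
    (hκ : 2 * (a ^ 2 / (4 * d)) * κ ≤ 1) {f : Ed d → ℝ} (hf : LipschitzWith 1 f) (x y : Ed d) :
    |eulerStep B a f x - eulerStep B a f y| ≤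
      (1 - a ^ 2 / (4 * d) * κ + (a ^ 2 / (4 * d)) ^ 2 * K ^ 2) * ‖x - y‖ := by
  have hf' : ∀ x y, |f x - f y| ≤ ‖x - y‖ := fun x y => by
    simpa [Real.dist_eq, dist_eq_norm] using hf.dist_le_mul x y
  have hd' : (0 : ℝ) < d := by exact_mod_cast hd
  have h1 := (hf' _ _).trans (norm_add_smul_sub_le hB hdiss
    (show 0 ≤ a ^ 2 / (4 * d) by positivity) hκ x y)
  set e : Fin d → Ed d := fun i => a • EuclideanSpace.single i 1 with he
  have h2 : |∑ i, (f (x + e i) + f (x - e i)) - ∑ i, (f (y + e i) + f (y - e i))| ≤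
      2 * d * ‖x - y‖ := by
    rw [← Finset.sum_sub_distrib]
    refine (Finset.abs_sum_le_sum_abs _ _).trans ?_
    calc ∑ i, |f (x + e i) + f (x - e i) - (f (y + e i) + f (y - e i))|
        ≤ ∑ _i : Fin d, 2 * ‖x - y‖ := Finset.sum_le_sum fun i _ => by
          have h3 := hf' (x + e i) (y + e i)
          have h4 := hf' (x - e i) (y - e i)
          rw [add_sub_add_right_eq_sub] at h3
          rw [sub_sub_sub_cancel_right] at h4
          have h5 := abs_add_le (f (x + e i) - f (y + e i)) (f (x - e i) - f (y - e i))
          rw [show f (x + e i) - f (y + e i) + (f (x - e i) - f (y - e i)) =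
            f (x + e i) + f (x - e i) - (f (y + e i) + f (y - e i)) by ring] at h5
          linarith
      _ = _ := by simp; ring
  have h3 : |(∑ i, (f (x + e i) + f (x - e i))) / (4 * d) -
      (∑ i, (f (y + e i) + f (y - e i))) / (4 * d)| ≤ ‖x - y‖ / 2 := by
    rw [← sub_div, abs_div, abs_of_pos (show (0 : ℝ) < 4 * d by positivity),
      div_le_iff₀ (by positivity)]
    linarith
  simp only [eulerStep]
  rw [abs_le] at h1 h3 ⊢
  constructor <;> linarith [h1.1, h1.2, h3.1, h3.2]

namespace IsMollifier

variable {ε : ℝ} {ψ : Ed d → ℝ}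

lemma moll_add_const_arg (f : Ed d → ℝ) (x v : Ed d) :
    moll ψ (fun z => f (z + v)) x = moll ψ f (x + v) := by
  simp_rw [moll_apply, sub_add_eq_add_sub]

lemma fderiv_moll_lipschitz (h : IsMollifier ε ψ) {f : Ed d → ℝ} (hf : LipschitzWith 1 f)
    (x y v : Ed d) : |fderiv ℝ (moll ψ f) x v - fderiv ℝ (moll ψ f) y v| ≤
      (∫ z, ‖fderiv ℝ ψ z‖) * ‖v‖ * ‖x - y‖ := by
  rw [moll_fderiv h.isTestFun hf.continuous, moll_fderiv h.isTestFun hf.continuous]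
  refine (moll_lipschitz (h.isTestFun.fderiv_apply v) hf x y).trans ?_
  rw [NNReal.coe_one, mul_one]
  gcongr
  rw [← integral_mul_const]
  refine integral_mono ((h.isTestFun.fderiv_apply v).integrable _).abs ?_
    fun z => (fderiv ℝ ψ z).le_opNorm v
  exact (((h.isTestFun.1.continuous_fderiv (by simp)).integrable_of_hasCompactSupport
    (h.isTestFun.2.fderiv ℝ)).norm).mul_const _

lemma hess2_moll_lipschitz (h : IsMollifier ε ψ) {f : Ed d → ℝ} (hf : LipschitzWith 1 f)
    (i : Fin d) (x y : Ed d) : |hess2 (moll ψ f) x i i - hess2 (moll ψ f) y i i| ≤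
      (∑ j, ∫ z, |hess2 ψ z j j|) * ‖x - y‖ := by
  rw [moll_hess2 h.isTestFun hf.continuous, moll_hess2 h.isTestFun hf.continuous]
  refine (moll_lipschitz (h.isTestFun.hess2 i i) hf x y).trans ?_
  rw [NNReal.coe_one, mul_one]
  gcongr
  exact Finset.single_le_sum (f := fun j => ∫ z, |hess2 ψ z j j|)
    (fun j _ => integral_nonneg fun z => abs_nonneg _) (Finset.mem_univ i)

lemma norm_fderiv_moll_le (h : IsMollifier ε ψ) {f : Ed d → ℝ} (hf : LipschitzWith 1 f)
    (x : Ed d) : ‖fderiv ℝ (moll ψ f) x‖ ≤ 1 := by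
  simpa using norm_fderiv_le_of_lipschitz ℝ (x₀ := x) (h.lipschitz hf)

lemma abs_lap_moll_le (h : IsMollifier ε ψ) {f : Ed d → ℝ} (hf : LipschitzWith 1 f)
    (x : Ed d) : |lap (moll ψ f) x| ≤ d * ∫ z, ‖fderiv ℝ ψ z‖ := by
  have hc : 0 ≤ ∫ z, ‖fderiv ℝ ψ z‖ := integral_nonneg fun z => norm_nonneg _
  calc |lap (moll ψ f) x| ≤ ∑ i, |hess2 (moll ψ f) x i i| := Finset.abs_sum_le_sum_abs _ _
    _ ≤ ∑ _i : Fin d, ∫ z, ‖fderiv ℝ ψ z‖ := by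
        refine Finset.sum_le_sum fun i _ => ?_
        rw [hess2_eq (moll_contDiff h.isTestFun hf.continuous)]
        have hl : LipschitzWith (∫ z, ‖fderiv ℝ ψ z‖).toNNReal
            fun y => fderiv ℝ (moll ψ f) y (EuclideanSpace.single i 1) :=
          LipschitzWith.of_dist_le_mul fun y z => by
            simpa [Real.dist_eq, dist_eq_norm, hc] using
              h.fderiv_moll_lipschitz hf y z (EuclideanSpace.single i 1)
        have h1 := norm_fderiv_le_of_lipschitz ℝ (x₀ := x) hl
        rw [Real.coe_toNNReal _ hc] at h1
        refine ((fderiv ℝ (fun y => fderiv ℝ (moll ψ f) y (EuclideanSpace.single i 1)) x).le_opNorm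
          (EuclideanSpace.single i 1)).trans ?_
        simpa using h1
    _ = _ := by simp

lemma abs_moll_eulerStep_sub_le (h : IsMollifier ε ψ) (hd : 0 < d) {B : Ed d → Ed d} {K : ℝ≥0}
    (hB : LipschitzWith K B) {f : Ed d → ℝ} (hf : LipschitzWith 1 f) {a : ℝ} (ha : 0 ≤ a)
    (x : Ed d) :
    |moll ψ (eulerStep B a f) x - moll ψ f x - a ^ 2 / (4 * d) * LopI B (moll ψ f) x| ≤
      a ^ 2 / (4 * d) * (K * ε + 2 * d * a * (∑ j, ∫ z, |hess2 ψ z j j|) +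
        2 * (a ^ 2 / (4 * d)) * (∫ z, ‖fderiv ℝ ψ z‖) * ‖B x‖ ^ 2) := by
  have hd' : (0 : ℝ) < d := by exact_mod_cast hd
  set c₂ := ∑ j, ∫ z, |hess2 ψ z j j|
  set c₁ := ∫ z, ‖fderiv ℝ ψ z‖
  obtain ⟨τ, hτ⟩ : ∃ τ, τ = a ^ 2 / (4 * (d : ℝ)) := ⟨_, rfl⟩
  have hτ0 : 0 ≤ τ := by rw [hτ]; positivity
  have haτ : a ^ 2 = 4 * d * τ := by rw [hτ]; field_simp
  set e : Fin d → Ed d := fun i => a • EuclideanSpace.single i 1 with he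
  have hfc := hf.continuous
  set g := moll ψ f with hg
  have hgs : ContDiff ℝ (⊤ : ℕ∞) g := moll_contDiff h.isTestFun hfc
  set Z : Ed d → ℝ := fun z => (∑ i, (f (z + e i) + f (z + -e i))) / (4 * d) +
    f (z + (2 * τ) • B x) / 2 with hZ
  have hZc : Continuous Z := by fun_prop
  have hZm : moll ψ Z x = (∑ i, (g (x + e i) + g (x - e i))) / (4 * d) +
      g (x + (2 * τ) • B x) / 2 := by
    have hi : ∀ v : Ed d, Integrable fun y => f (x - y + v) * ψ y := fun v =>
      moll_integrable h.isTestFun (hfc.comp (continuous_add_const v)) x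
    have hv : ∀ v : Ed d, ∫ y, f (x - y + v) * ψ y = g (x + v) := fun v => by
      rw [hg, ← moll_add_const_arg, moll_apply]
    have e1 : ∀ y, Z (x - y) * ψ y =
        (∑ i, (f (x - y + e i) * ψ y + f (x - y + -e i) * ψ y)) / (4 * d) +
        f (x - y + (2 * τ) • B x) * ψ y / 2 := fun y => by
      simp only [hZ, ← add_mul, ← Finset.sum_mul]
      ring
    have hs : ∀ i, Integrable fun y => f (x - y + e i) * ψ y + f (x - y + -e i) * ψ y :=
      fun i => (hi (e i)).add (hi (-e i))
    rw [moll_apply]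
    simp_rw [e1]
    rw [integral_add ((integrable_finsetSum _ fun i _ => hs i).div_const _)
      ((hi _).div_const 2), integral_div, integral_div,
      integral_finsetSum _ fun i _ => hs i, hv]
    simp_rw [integral_add (hi (e _)) (hi (-e _)), hv, ← sub_eq_add_neg]
  have h1 : |moll ψ (eulerStep B a f) x - moll ψ Z x - 0| ≤ τ * (K * ε) := by
    refine h.abs_moll_sub_le (eulerStep_continuous hB.continuous a hfc) hZc fun y hy => ?_
    have e2 : eulerStep B a f (x - y) - Z (x - y) - 0 =
        (f (x - y + (2 * τ) • B (x - y)) - f (x - y + (2 * τ) • B x)) / 2 := by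
      simp only [hZ, eulerStep, he, ← hτ, ← sub_eq_add_neg]
      ring
    rw [e2, abs_div, abs_of_pos (two_pos : (0 : ℝ) < 2)]
    have h2 := hf.dist_le_mul (x - y + (2 * τ) • B (x - y)) (x - y + (2 * τ) • B x)
    rw [Real.dist_eq, dist_eq_norm, add_sub_add_left_eq_sub, ← smul_sub, norm_smul,
      Real.norm_of_nonneg (by positivity), NNReal.coe_one, one_mul] at h2
    have h3 := hB.dist_le_mul (x - y) x
    rw [dist_eq_norm, dist_eq_norm, sub_sub_cancel_left, norm_neg] at h3
    have h4 : (K : ℝ) * ‖y‖ ≤ K * ε := by gcongr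
    rw [div_le_iff₀ two_pos]
    nlinarith [mul_le_mul_of_nonneg_left (h3.trans h4) hτ0]
  have h2 : |∑ i, (g (x + e i) + g (x - e i) - 2 * g x - a ^ 2 * hess2 g x i i)| ≤
      d * (2 * c₂ * a ^ 3) := by
    refine (Finset.abs_sum_le_sum_abs _ _).trans ((Finset.sum_le_sum fun i _ =>
      abs_second_difference_le hgs (h.hess2_moll_lipschitz hf i) x ha).trans (le_of_eq ?_))
    rw [Finset.sum_const, Finset.card_univ, Fintype.card_fin, nsmul_eq_mul]
  have h3 := abs_add_sub_fderiv_le (hgs.differentiable (by simp)) (h.fderiv_moll_lipschitz hf) x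
    ((2 * τ) • B x)
  rw [norm_smul, Real.norm_of_nonneg (by positivity), map_smul, smul_eq_mul] at h3
  have h4 : ∑ i, (g (x + e i) + g (x - e i) - 2 * g x - a ^ 2 * hess2 g x i i) =
      ∑ i, (g (x + e i) + g (x - e i)) - d * (2 * g x) - a ^ 2 * lap g x := by
    simp [Finset.sum_sub_distrib, lap, Finset.mul_sum]
  rw [h4] at h2
  rw [LopI_eq, ← hτ]
  have h5 : moll ψ (eulerStep B a f) x - g x - τ * (lap g x + fderiv ℝ g x (B x)) =
      (moll ψ (eulerStep B a f) x - moll ψ Z x - 0) +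
      (∑ i, (g (x + e i) + g (x - e i)) - d * (2 * g x) - a ^ 2 * lap g x) / (4 * d) +
      (g (x + (2 * τ) • B x) - g x - 2 * τ * fderiv ℝ g x (B x)) / 2 := by
    rw [hZm, haτ]
    field_simp
    ring
  have h6 : |(∑ i, (g (x + e i) + g (x - e i)) - d * (2 * g x) - a ^ 2 * lap g x) / (4 * d)| ≤
      τ * (2 * d * a * c₂) := by
    rw [abs_div, abs_of_pos (show (0 : ℝ) < 4 * d by positivity), div_le_iff₀ (by positivity)]
    refine h2.trans (le_of_eq ?_)
    rw [pow_succ a 2, haτ]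
    ring
  rw [h5]
  refine (abs_add_three _ _ _).trans ?_
  rw [abs_div _ (2 : ℝ), abs_of_pos (two_pos : (0 : ℝ) < 2)]
  calc _ ≤ τ * (K * ε) + τ * (2 * d * a * c₂) + c₁ * (2 * τ * ‖B x‖) ^ 2 / 2 := by gcongr
    _ = _ := by ring

end IsMollifier

lemma integrable_norm_of_one_add_norm_rpow {M : Measure (Ed d)} {p : ℝ} (hp : 1 ≤ p)
    (hM : Integrable (fun x => (1 + ‖x‖) ^ p) M) : Integrable (fun x => ‖x‖) M := by
  refine (integrable_one_add_norm_rpow_of_le hp hM).mono' continuous_norm.aestronglyMeasurable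
    (Eventually.of_forall fun x => ?_)
  simp

lemma LipschitzWith.norm_le_mul_one_add_norm {B : Ed d → Ed d} {K : ℝ≥0} (hB : LipschitzWith K B)
    (x : Ed d) : ‖B x‖ ≤ (‖B 0‖ + K) * (1 + ‖x‖) := by
  have h1 := hB.dist_le_mul x 0
  rw [dist_zero_right, dist_eq_norm] at h1
  have h2 := norm_add_le (B x - B 0) (B 0)
  rw [sub_add_cancel] at h2
  nlinarith [norm_nonneg (B 0), norm_nonneg x, K.coe_nonneg,
    mul_nonneg (norm_nonneg (B 0)) (norm_nonneg x)]

lemma LipschitzWith.norm_sq_le_mul_rpow {B : Ed d → Ed d} {K : ℝ≥0} (hB : LipschitzWith K B)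
    {p : ℝ} (hp : 2 ≤ p) (x : Ed d) : ‖B x‖ ^ 2 ≤ (‖B 0‖ + K) ^ 2 * (1 + ‖x‖) ^ p := by
  calc ‖B x‖ ^ 2 ≤ ((‖B 0‖ + K) * (1 + ‖x‖)) ^ 2 := by
        gcongr
        exact hB.norm_le_mul_one_add_norm x
    _ = (‖B 0‖ + K) ^ 2 * (1 + ‖x‖) ^ (2 : ℝ) := by rw [mul_pow, Real.rpow_two]
    _ ≤ _ := by
        gcongr
        · linarith [norm_nonneg x]

lemma LipschitzWith.integrable_norm_sq {B : Ed d → Ed d} {K : ℝ≥0} (hB : LipschitzWith K B)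
    {p : ℝ} (hp : 2 ≤ p) {M : Measure (Ed d)} (hM : Integrable (fun x => (1 + ‖x‖) ^ p) M) :
    Integrable (fun x => ‖B x‖ ^ 2) M :=
  (hM.const_mul ((‖B 0‖ + K) ^ 2)).mono' (hB.continuous.norm.pow 2).aestronglyMeasurable
    (Eventually.of_forall fun x => by
      rw [Real.norm_of_nonneg (by positivity)]
      exact hB.norm_sq_le_mul_rpow hp x)

lemma integrable_LopI {M : Measure (Ed d)} [IsFiniteMeasure M] {m c : ℝ} {B : Ed d → Ed d}
    (hB : Measurable B) (hgrow : ∀ x, ‖B x‖ ≤ c * (1 + ‖x‖) ^ m) {φ : Ed d → ℝ}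
    (hφ : IsTestFun φ) : Integrable (LopI B φ) M := by
  obtain ⟨c', _, hc'⟩ := exists_LopI_bound hφ c m
  exact Integrable.of_bound (LopI_measurable hB hφ).aestronglyMeasurable c'
    (Eventually.of_forall (hc' _ hgrow))

lemma LipschitzWith.integrable_LopI {M : Measure (Ed d)} [IsFiniteMeasure M] {B : Ed d → Ed d}
    {K : ℝ≥0} (hB : LipschitzWith K B) {φ : Ed d → ℝ} (hφ : IsTestFun φ) :
    Integrable (LopI B φ) M :=
  _root_.integrable_LopI hB.continuous.measurable (m := 1) (c := ‖B 0‖ + K)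
    (fun x => by simpa using hB.norm_le_mul_one_add_norm x) hφ

lemma abs_integral_LopI_sub_le {M : Measure (Ed d)} {B₁ B₂ : Ed d → Ed d} {φ : Ed d → ℝ}
    (hφ : ∀ x, ‖fderiv ℝ φ x‖ ≤ 1) (h₁ : Integrable (LopI B₁ φ) M)
    (h₂ : Integrable (LopI B₂ φ) M) (hi : Integrable (fun x => ‖B₁ x - B₂ x‖) M) :
    |∫ x, LopI B₁ φ x ∂M - ∫ x, LopI B₂ φ x ∂M| ≤ ∫ x, ‖B₁ x - B₂ x‖ ∂M := by
  rw [← integral_sub h₁ h₂, ← Real.norm_eq_abs]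
  refine norm_integral_le_of_norm_le hi (Eventually.of_forall fun x => ?_)
  rw [LopI_eq, LopI_eq, add_sub_add_left_eq_sub, ← map_sub]
  exact (fderiv ℝ φ x).le_of_opNorm_le (hφ x) _ |>.trans (by rw [one_mul])

lemma integrable_norm_sub_of_growth {M : Measure (Ed d)} {m c : ℝ} (hm : 1 ≤ m)
    {b B : Ed d → Ed d} (hb : Measurable b) (hgrow : ∀ x, ‖b x‖ ≤ c * (1 + ‖x‖) ^ m)
    {K : ℝ≥0} (hB : LipschitzWith K B) (hM : Integrable (fun x => (1 + ‖x‖) ^ m) M) :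
    Integrable (fun x => ‖b x - B x‖) M := by
  refine ((hM.const_mul c).add (hM.const_mul (‖B 0‖ + K))).mono'
    (hb.sub hB.continuous.measurable).norm.aestronglyMeasurable (Eventually.of_forall fun x => ?_)
  rw [norm_norm]
  have hx := norm_nonneg x
  have h1 : 1 + ‖x‖ ≤ (1 + ‖x‖) ^ m := by
    simpa using Real.rpow_le_rpow_of_exponent_le (show 1 ≤ 1 + ‖x‖ by linarith) hm
  have h2 := hB.norm_le_mul_one_add_norm x
  have h3 : (‖B 0‖ + K) * (1 + ‖x‖) ≤ (‖B 0‖ + K) * (1 + ‖x‖) ^ m := by gcongr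
  refine (norm_sub_le _ _).trans ?_
  exact add_le_add (hgrow x) (h2.trans h3)

lemma IsMollifier.integral_LopI_sub_le {ε : ℝ} {ψ : Ed d → ℝ} (h : IsMollifier ε ψ) (hd : 0 < d)
    {B : Ed d → Ed d} {K : ℝ≥0} (hB : LipschitzWith K B) {κ : ℝ}
    (hdiss : ∀ x y, ⟪x - y, B x - B y⟫ ≤ -κ * ‖x - y‖ ^ 2) {a : ℝ} (ha : 0 < a)
    (hκ : 2 * (a ^ 2 / (4 * d)) * κ ≤ 1) {μ σ : Measure (Ed d)} [IsProbabilityMeasure μ]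
    [IsProbabilityMeasure σ] {p Q : ℝ} (hp : 2 ≤ p)
    (hμ : Integrable (fun x => (1 + ‖x‖) ^ p) μ) (hσ : Integrable (fun x => (1 + ‖x‖) ^ p) σ)
    (hμQ : ∫ x, (1 + ‖x‖) ^ p ∂μ ≤ Q) (hσQ : ∫ x, (1 + ‖x‖) ^ p ∂σ ≤ Q)
    {f : Ed d → ℝ} (hf : LipschitzWith 1 f) (hfc : HasCompactSupport f) :
    ∫ x, LopI B (moll ψ f) x ∂μ - ∫ x, LopI B (moll ψ f) x ∂σ ≤
      (mollKant ψ μ σ - (∫ x, moll ψ f x ∂μ - ∫ x, moll ψ f x ∂σ)) / (a ^ 2 / (4 * d))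
      - (κ - a ^ 2 / (4 * d) * K ^ 2) * mollKant ψ μ σ
      + 2 * (K * ε + 2 * d * a * (∑ j, ∫ z, |hess2 ψ z j j|) +
        2 * (a ^ 2 / (4 * d)) * (∫ z, ‖fderiv ℝ ψ z‖) * ((‖B 0‖ + K) ^ 2 * Q)) := by
  have hd' : (0 : ℝ) < d := by exact_mod_cast hd
  have hμ1 := integrable_norm_of_one_add_norm_rpow (by linarith) hμ
  have hσ1 := integrable_norm_of_one_add_norm_rpow (by linarith) hσ
  have hpt := h.abs_moll_eulerStep_sub_le hd hB hf ha.le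
  have hr := eulerStep_lipschitz hd hB hdiss hκ hf
  set c₂ := ∑ j, ∫ z, |hess2 ψ z j j|
  set c₁ := ∫ z, ‖fderiv ℝ ψ z‖
  have hc₁ : 0 ≤ c₁ := integral_nonneg fun z => norm_nonneg _
  obtain ⟨τ, hτ⟩ : ∃ τ, τ = a ^ 2 / (4 * (d : ℝ)) := ⟨_, rfl⟩
  have hτ0 : 0 < τ := by rw [hτ]; positivity
  rw [← hτ] at hκ ⊢
  simp only [← hτ] at hpt hr
  have hg := moll_isTestFun h.isTestFun hf.continuous hfc
  set g := moll ψ f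
  set S := moll ψ (eulerStep B a f) with hS
  have hr0 : 0 < 1 - τ * κ + τ ^ 2 * K ^ 2 := by
    have : 0 ≤ τ ^ 2 * (K : ℝ) ^ 2 := by positivity
    nlinarith
  have hSl : LipschitzWith (1 - τ * κ + τ ^ 2 * K ^ 2).toNNReal S :=
    h.lipschitz (LipschitzWith.of_dist_le_mul fun x y => by
      rw [Real.coe_toNNReal _ hr0.le, Real.dist_eq, dist_eq_norm]
      exact hr x y)
  have hle := h.integral_moll_sub_le_mul hμ1 hσ1 hr0 hr
  rw [← hS] at hle
  have hbound : ∀ M : Measure (Ed d), IsProbabilityMeasure M →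
      Integrable (fun x => (1 + ‖x‖) ^ p) M → ∫ x, (1 + ‖x‖) ^ p ∂M ≤ Q →
      |∫ x, S x ∂M - ∫ x, g x ∂M - τ * ∫ x, LopI B g x ∂M| ≤
        τ * (K * ε + 2 * d * a * c₂ + 2 * τ * c₁ * ((‖B 0‖ + K) ^ 2 * Q)) := by
    intro M _ hM hMQ
    have hM1 := integrable_norm_of_one_add_norm_rpow (by linarith) hM
    have hiS := hSl.integrable_of_norm hM1
    have hig := hg.integrable M
    have hiL := hB.integrable_LopI (M := M) hg
    have hiB := hB.integrable_norm_sq hp hM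
    have hB2 : ∫ x, ‖B x‖ ^ 2 ∂M ≤ (‖B 0‖ + K) ^ 2 * Q := by
      calc ∫ x, ‖B x‖ ^ 2 ∂M ≤ ∫ x, (‖B 0‖ + K) ^ 2 * (1 + ‖x‖) ^ p ∂M :=
            integral_mono hiB (hM.const_mul _) (hB.norm_sq_le_mul_rpow hp)
        _ ≤ _ := by
            rw [integral_const_mul]
            gcongr
    have hiR : Integrable (fun x => τ * (K * ε + 2 * d * a * c₂ + 2 * τ * c₁ * ‖B x‖ ^ 2)) M :=
      ((integrable_const _).add (hiB.const_mul _)).const_mul _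
    have hiSg : Integrable (fun x => S x - g x) M := hiS.sub hig
    have e1 : ∫ x, S x ∂M - ∫ x, g x ∂M - τ * ∫ x, LopI B g x ∂M =
        ∫ x, (S x - g x - τ * LopI B g x) ∂M := by
      rw [integral_sub hiSg (hiL.const_mul τ), integral_sub hiS hig, integral_const_mul]
    rw [e1, ← Real.norm_eq_abs]
    refine (norm_integral_le_of_norm_le hiR (Eventually.of_forall hpt)).trans ?_
    rw [integral_const_mul, integral_add (integrable_const _) (hiB.const_mul _),
      integral_const_mul, integral_const, probReal_univ, one_smul]
    gcongr
  have h1 := (abs_le.1 (hbound μ inferInstance hμ hμQ)).1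
  have h2 := (abs_le.1 (hbound σ inferInstance hσ hσQ)).2
  set W := mollKant ψ μ σ
  set R := K * ε + 2 * d * a * c₂ + 2 * τ * c₁ * ((‖B 0‖ + K) ^ 2 * Q)
  have h3 : (W - (∫ x, g x ∂μ - ∫ x, g x ∂σ)) / τ - (κ - τ * K ^ 2) * W + 2 * R =
      (W - (∫ x, g x ∂μ - ∫ x, g x ∂σ) - τ * (κ - τ * K ^ 2) * W + 2 * τ * R) / τ := by
    field_simp
  rw [h3, le_div_iff₀ hτ0]
  nlinarith

lemma IsFlow.mollKant_le {m c : ℝ} {β : ℝ → Ed d → Ed d} {μ : ℝ → Measure (Ed d)}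
    (h : IsFlow m c β μ) (hd : 0 < d) {C κ T Q η : ℝ} (hC : 0 ≤ C) (hT : 0 ≤ T)
    (hmom : ∀ s, Integrable (fun x => (1 + ‖x‖) ^ (m + 1)) (μ s))
    (hQ : ∀ s, s ≤ T → ∫ x, (1 + ‖x‖) ^ (m + 1) ∂(μ s) ≤ Q)
    {σ : Measure (Ed d)} [IsProbabilityMeasure σ] {b : Ed d → Ed d} (hb : Measurable b)
    (hgrow : ∀ x, ‖b x‖ ≤ c * (1 + ‖x‖) ^ m)
    (hσm : Integrable (fun x => (1 + ‖x‖) ^ (m + 1)) σ)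
    (hσQ : ∫ x, (1 + ‖x‖) ^ (m + 1) ∂σ ≤ Q) (hσ : IsStationarySolI b σ)
    (hβ : ∀ s x, ‖β s x - b x‖ ≤ C * kant (μ s) σ)
    {B : Ed d → Ed d} {K : ℝ≥0} (hB : LipschitzWith K B)
    (hdiss : ∀ x y, ⟪x - y, B x - B y⟫ ≤ -κ * ‖x - y‖ ^ 2)
    (hσB : ∫ x, ‖b x - B x‖ ∂σ ≤ η)
    (hμBi : IntegrableOn (fun s => ∫ x, ‖b x - B x‖ ∂(μ s)) (Ioc 0 T))
    (hμB : ∫ s in Ioc 0 T, ∫ x, ‖b x - B x‖ ∂(μ s) ≤ η)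
    {ε : ℝ} (hε : 0 ≤ ε) {ψ : Ed d → ℝ} (hψ : IsMollifier ε ψ) {a : ℝ} (ha : 0 < a)
    (haκ : 2 * (a ^ 2 / (4 * d)) * κ ≤ 1) (hl : 0 ≤ κ - C - a ^ 2 / (4 * d) * K ^ 2) :
    mollKant ψ (μ T) σ ≤
      Real.exp (-(κ - C - a ^ 2 / (4 * d) * K ^ 2) * T) * mollKant ψ (μ 0) σ +
      (η + T * (2 * C * ε + η + 2 * (K * ε + 2 * d * a * (∑ j, ∫ z, |hess2 ψ z j j|) +
        2 * (a ^ 2 / (4 * d)) * (∫ z, ‖fderiv ℝ ψ z‖) * ((‖B 0‖ + K) ^ 2 * Q)))) := by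
  have hm := h.one_le
  have hp := h.prob
  have hc : 0 ≤ c := by simpa using (norm_nonneg _).trans (hgrow 0)
  have hd' : (0 : ℝ) < d := by exact_mod_cast hd
  have hQ0 : 0 ≤ Q := (integral_nonneg fun x => by positivity).trans hσQ
  have hη : 0 ≤ η := (integral_nonneg fun x => norm_nonneg _).trans hσB
  have hμ1 := fun s => integrable_norm_of_one_add_norm_rpow (by linarith) (hmom s)
  have hσ1 := integrable_norm_of_one_add_norm_rpow (by linarith) hσm
  have hμm := fun s => integrable_one_add_norm_rpow_of_le (show m ≤ m + 1 by linarith) (hmom s)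
  have hσm' := integrable_one_add_norm_rpow_of_le (show m ≤ m + 1 by linarith) hσm
  have hQm : ∀ s, s ≤ T → ∫ x, (1 + ‖x‖) ^ m ∂(μ s) ≤ Q := fun s hs =>
    (integral_mono (hμm s) (hmom s) fun x =>
      Real.rpow_le_rpow_of_exponent_le (by simp) (by linarith)).trans (hQ s hs)
  have hest := fun s (hs : s ≤ T) (f : {f : Ed d → ℝ // LipschitzWith 1 f ∧ HasCompactSupport f}) =>
    hψ.integral_LopI_sub_le hd hB hdiss ha haκ (by linarith) (hmom s) hσm (hQ s hs) hσQ f.2.1 f.2.2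
  obtain ⟨R, hR⟩ : ∃ R, R = 2 * (K * ε + 2 * d * a * (∑ j, ∫ z, |hess2 ψ z j j|) +
        2 * (a ^ 2 / (4 * d)) * (∫ z, ‖fderiv ℝ ψ z‖) * ((‖B 0‖ + K) ^ 2 * Q)) := ⟨_, rfl⟩
  have hR0 : 0 ≤ R := by
    have h1 : 0 ≤ ∑ j, ∫ z, |hess2 ψ z j j| :=
      Finset.sum_nonneg fun j _ => integral_nonneg fun z => abs_nonneg _
    have h2 : 0 ≤ ∫ z, ‖fderiv ℝ ψ z‖ := integral_nonneg fun z => norm_nonneg _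
    rw [hR]; positivity
  rw [← hR]
  simp only [← hR] at hest
  have hτ0 : 0 < a ^ 2 / (4 * (d : ℝ)) := by positivity
  set τ := a ^ 2 / (4 * (d : ℝ))
  set e : ℝ → ℝ := fun s => ∫ x, ‖b x - B x‖ ∂(μ s) with he
  have he0 : ∀ s, 0 ≤ e s := fun s => integral_nonneg fun x => norm_nonneg _
  have hconst : IntegrableOn (fun _ : ℝ => 2 * C * ε + η + R) (Ioc 0 T) :=
    integrableOn_const (by simp)
  have hE : IntegrableOn (fun s => e s + (2 * C * ε + η + R)) (Ioc 0 T) := hμBi.add hconst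
  have hg : ∀ f : {f : Ed d → ℝ // LipschitzWith 1 f ∧ HasCompactSupport f},
      IsTestFun (moll ψ f.1) := fun f => moll_isTestFun hψ.isTestFun f.2.1.continuous f.2.2
  have key := le_exp_mul_add_integral_of_isLUB
    (ι := {f : Ed d → ℝ // LipschitzWith 1 f ∧ HasCompactSupport f})
    (F := fun f s => ∫ x, moll ψ f.1 x ∂(μ s) - ∫ x, moll ψ f.1 x ∂σ)
    (D := fun f s => ∫ x, LopI (β s) (moll ψ f.1) x ∂(μ s))
    (W := fun s => mollKant ψ (μ s) σ) (E := fun s => e s + (2 * C * ε + η + R))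
    (c := d * (∫ z, ‖fderiv ℝ ψ z‖) + c * Q) hT hτ0 hl
    (fun s _ _ => hψ.isLUB_mollKant (hμ1 s) hσ1)
    (fun f s t hs hst _ => by
      rw [← h.sub_eq (hg f) hs (hs.trans hst)]; ring)
    (fun f s t hs hst _ =>
      (h.intervalIntegrable (hg f) hs).symm.trans (h.intervalIntegrable (hg f) (hs.trans hst)))
    (fun f s _ hsT => by
      rw [integral_LopI_eq (h.meas s) (hg f) (h.grow s)]
      refine (abs_add_le _ _).trans (add_le_add ?_ ?_)
      · have := norm_integral_le_of_norm_le_const (μ := μ s) (f := lap (moll ψ f.1))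
          (Eventually.of_forall fun x => hψ.abs_lap_moll_le f.2.1 x)
        simpa using this
      · simpa using abs_integral_fderiv_apply_le zero_le_one (hψ.norm_fderiv_moll_le f.2.1)
          (h.grow s) (hμm s) (hQm s hsT))
    hE (fun s => by have := he0 s; positivity)
    (fun f s _ hsT => by
      have h1 := hest s hsT f
      have hbB := integrable_norm_sub_of_growth hm hb hgrow hB (hμm s)
      have hβB := integrable_norm_sub_of_growth hm (h.meas s) (h.grow s) hB (hμm s)
      have h2 := (abs_le.1 (abs_integral_LopI_sub_le (hψ.norm_fderiv_moll_le f.2.1)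
        (h.LopI_integrable (hg f) s) (hB.integrable_LopI (hg f)) hβB)).2
      have h3 := (abs_le.1 (abs_integral_LopI_sub_le (hψ.norm_fderiv_moll_le f.2.1)
        (integrable_LopI hb hgrow (hg f)) (hB.integrable_LopI (hg f))
        (integrable_norm_sub_of_growth hm hb hgrow hB hσm'))).1
      rw [hσ _ (hg f)] at h3
      have h4 : ∫ x, ‖β s x - B x‖ ∂(μ s) ≤ C * kant (μ s) σ + e s := by
        have : ∫ x, (C * kant (μ s) σ + ‖b x - B x‖) ∂(μ s) = C * kant (μ s) σ + e s := by
          rw [integral_add (integrable_const _) hbB]; simp [he]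
        rw [← this]
        refine integral_mono hβB ((integrable_const _).add hbB) fun x => ?_
        have := norm_add_le (β s x - b x) (b x - B x)
        rw [sub_add_sub_cancel] at this
        dsimp only
        linarith [hβ s x]
      have h5 := mul_le_mul_of_nonneg_left (hψ.kant_le_mollKant (hμ1 s) hσ1) hC
      linarith)
  refine key.trans (add_le_add le_rfl ?_)
  rw [intervalIntegral.integral_of_le hT, integral_add hμBi hconst]
  have : ∫ _ in Ioc 0 T, (2 * C * ε + η + R) = T * (2 * C * ε + η + R) := by
    simp [hT]
  rw [this]
  linarith

lemma IsFlow.kant_le {m c : ℝ} {β : ℝ → Ed d → Ed d} {μ : ℝ → Measure (Ed d)}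
    (h : IsFlow m c β μ) (hd : 0 < d) {C κ T : ℝ} (hC : 0 ≤ C) (hCκ : C < κ) (hT : 0 ≤ T)
    (hmom : ∀ s, Integrable (fun x => (1 + ‖x‖) ^ (m + 1)) (μ s))
    (hβdiss : ∀ s x y, ⟪x - y, β s x - β s y⟫ ≤ -κ * ‖x - y‖ ^ 2)
    {σ : Measure (Ed d)} [IsProbabilityMeasure σ] {b : Ed d → Ed d} (hb : Measurable b)
    (hgrow : ∀ x, ‖b x‖ ≤ c * (1 + ‖x‖) ^ m)
    (hbdiss : ∀ x y, ⟪x - y, b x - b y⟫ ≤ -κ * ‖x - y‖ ^ 2)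
    (hσm : Integrable (fun x => (1 + ‖x‖) ^ (m + 1)) σ) (hσ : IsStationarySolI b σ)
    (hβ : ∀ s x, ‖β s x - b x‖ ≤ C * kant (μ s) σ) :
    kant (μ T) σ ≤ Real.exp (-(κ - C) * T) * kant (μ 0) σ := by
  have hm := h.one_le
  have hp := h.prob
  have hd' : (0 : ℝ) < d := by exact_mod_cast hd
  obtain ⟨Q₁, hQ₁, hQμ⟩ := h.exists_moment_bound (hC.trans_lt hCκ) hβdiss hmom hT
  set Q := max Q₁ (∫ x, (1 + ‖x‖) ^ (m + 1) ∂σ)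
  have hQ0 : 0 ≤ Q := hQ₁.trans (le_max_left _ _)
  have hQ : ∀ s, s ≤ T → ∫ x, (1 + ‖x‖) ^ (m + 1) ∂(μ s) ≤ Q := fun s hs =>
    (hQμ s hs).trans (le_max_left _ _)
  have hσQ : ∫ x, (1 + ‖x‖) ^ (m + 1) ∂σ ≤ Q := le_max_right _ _
  have hμ1 := fun s => integrable_norm_of_one_add_norm_rpow (by linarith) (hmom s)
  have hσ1 := integrable_norm_of_one_add_norm_rpow (by linarith) hσm
  have hμm := fun s => integrable_one_add_norm_rpow_of_le (show m ≤ m + 1 by linarith) (hmom s)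
  have hσm' := integrable_one_add_norm_rpow_of_le (show m ≤ m + 1 by linarith) hσm
  have hQm : ∀ s, s ≤ T → ∫ x, (1 + ‖x‖) ^ m ∂(μ s) ≤ Q := fun s hs =>
    (integral_mono (hμm s) (hmom s) fun x =>
      Real.rpow_le_rpow_of_exponent_le (by simp) (by linarith)).trans (hQ s hs)
  have hη : ∀ η > 0, kant (μ T) σ ≤
      Real.exp (-(κ - C) * T) * kant (μ 0) σ + (η + T * η) := by
    intro η hη
    obtain ⟨B, K, hB, hdiss, hσB, hμBi, hμB⟩ :=
      h.exists_lipschitz_approx hd hT hμm hQ0 hQm hb hgrow hbdiss hσm' hσ hη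
    have hε : ∀ ε > 0, kant (μ T) σ ≤ Real.exp (-(κ - C) * T) * kant (μ 0) σ +
        (η + T * (2 * C * ε + η + 2 * (K * ε))) + 2 * ε := by
      intro ε hε
      obtain ⟨ψ, hψ⟩ := exists_isMollifier d hε
      have hlim : Tendsto (fun a : ℝ =>
          Real.exp (-(κ - C - a ^ 2 / (4 * d) * K ^ 2) * T) * mollKant ψ (μ 0) σ +
          (η + T * (2 * C * ε + η + 2 * (K * ε + 2 * d * a * (∑ j, ∫ z, |hess2 ψ z j j|) +
            2 * (a ^ 2 / (4 * d)) * (∫ z, ‖fderiv ℝ ψ z‖) * ((‖B 0‖ + K) ^ 2 * Q)))))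
          (𝓝[>] 0) (𝓝 (Real.exp (-(κ - C) * T) * mollKant ψ (μ 0) σ +
            (η + T * (2 * C * ε + η + 2 * (K * ε))))) := by
        refine tendsto_nhdsWithin_of_tendsto_nhds ?_
        refine Continuous.tendsto' (by fun_prop) _ _ ?_
        simp
      have hτ : Tendsto (fun a : ℝ => a ^ 2 / (4 * (d : ℝ))) (𝓝[>] 0) (𝓝 0) :=
        tendsto_nhdsWithin_of_tendsto_nhds (Continuous.tendsto' (by fun_prop) _ _ (by simp))
      have hev₁ : ∀ᶠ a : ℝ in 𝓝[>] 0, 2 * (a ^ 2 / (4 * d)) * κ ≤ 1 :=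
        ((hτ.const_mul 2).mul_const κ).eventually (Iic_mem_nhds (by simp))
      have hev₂ : ∀ᶠ a : ℝ in 𝓝[>] 0, 0 ≤ κ - C - a ^ 2 / (4 * d) * K ^ 2 :=
        ((hτ.mul_const ((K : ℝ) ^ 2)).const_sub (κ - C)).eventually
          (Ici_mem_nhds (by simpa using hCκ))
      have hT' := ge_of_tendsto hlim (by
        filter_upwards [self_mem_nhdsWithin, hev₁, hev₂] with a ha h₁ h₂
        exact h.mollKant_le hd hC hT hmom hQ hb hgrow hσm hσQ hσ hβ hB hdiss hσB hμBi hμB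
          hε.le hψ ha h₁ h₂)
      have h₁ := hψ.kant_le_mollKant (hμ1 T) hσ1
      have h₂ := mul_le_mul_of_nonneg_left (hψ.mollKant_le_kant (hμ1 0) hσ1)
        (Real.exp_nonneg (-(κ - C) * T))
      linarith
    have hlim : Tendsto (fun ε : ℝ => Real.exp (-(κ - C) * T) * kant (μ 0) σ +
        (η + T * (2 * C * ε + η + 2 * (K * ε))) + 2 * ε) (𝓝[>] 0)
        (𝓝 (Real.exp (-(κ - C) * T) * kant (μ 0) σ + (η + T * η))) :=
      tendsto_nhdsWithin_of_tendsto_nhds (Continuous.tendsto' (by fun_prop) _ _ (by simp))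
    exact ge_of_tendsto hlim (by filter_upwards [self_mem_nhdsWithin] with ε h using hε ε h)
  have hlim : Tendsto (fun η : ℝ => Real.exp (-(κ - C) * T) * kant (μ 0) σ + (η + T * η)) (𝓝[>] 0)
      (𝓝 (Real.exp (-(κ - C) * T) * kant (μ 0) σ)) :=
    tendsto_nhdsWithin_of_tendsto_nhds (Continuous.tendsto' (by fun_prop) _ _ (by simp))
  exact ge_of_tendsto hlim (by filter_upwards [self_mem_nhdsWithin] with η h using hη η h)

lemma kant_eq_zero_of_subsingleton [Subsingleton (Ed d)] (μ ν : Measure (Ed d))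
    [IsProbabilityMeasure μ] [IsProbabilityMeasure ν] : kant μ ν = 0 := by
  have h : ∀ (ρ : Measure (Ed d)) [IsProbabilityMeasure ρ] (f : Ed d → ℝ),
      ∫ x, f x ∂ρ = f 0 := fun ρ _ f => by
    rw [integral_congr_ae (Eventually.of_forall fun x => congrArg f (Subsingleton.elim x 0))]
    simp
  simp [kant, h]

/-- **Remark (Kantorovich metric)**: under a dissipativity condition with
constant `κ` and Lipschitz dependence on the measure with constant `C < κ`,
solutions of the Cauchy problem converge exponentially in the Kantorovich
metric to the stationary solution. -/
theorem stmt12_kantorovich_convergence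
    (V : Ed d → ℝ) (hV : ContDiff ℝ 2 V) (hV1 : ∀ x, 1 ≤ V x)
    (hVinf : Tendsto V (cocompact (Ed d)) atTop)
    (m : ℝ) (hm : 1 ≤ m)
    (hVlow : ∀ x : Ed d, (1 + ‖x‖) ^ (m + 1) ≤ V x)
    (b : Ed d → Measure (Ed d) → Ed d)
    (hbBorel : ∀ μ, Measurable (fun x => b x μ))
    (Cb : ℝ) (hbGrow : ∀ (x : Ed d) (μ : Measure (Ed d)), memPV V μ →
      ‖b x μ‖ ≤ Cb * (1 + ‖x‖) ^ m)
    (C κ : ℝ) (hC : 0 < C) (hCκ : C < κ)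
    (hbLip : ∀ (x : Ed d) (μ σ : Measure (Ed d)), memPV V μ → memPV V σ →
      ‖b x μ - b x σ‖ ≤ C * kant μ σ)
    (hbMono : ∀ (x y : Ed d) (μ : Measure (Ed d)), memPV V μ →
      ⟪x - y, b x μ - b y μ⟫ ≤ -κ * ‖x - y‖ ^ 2)
    (μ : Measure (Ed d)) (hμ : memPV V μ)
    (hμstat : IsStationarySolI (fun y => b y μ) μ)
    (ν : Measure (Ed d)) (hν : memPV V ν)
    (μt : ℝ → Measure (Ed d))
    (hμtPV : ∀ t, 0 ≤ t → memPV V (μt t))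
    (hμtSol : IsCauchySolI b ν μt) :
    ∀ t : ℝ, 0 ≤ t →
      kant (μt t) μ ≤ Real.exp (-(κ - C) * t) * kant ν μ := by
  intro T hT
  have hpow : ∀ ρ, memPV V ρ → Integrable (fun x : Ed d => (1 + ‖x‖) ^ (m + 1)) ρ := fun ρ hρ =>
    hρ.2.mono' (Measurable.aestronglyMeasurable (by fun_prop)) (Eventually.of_forall fun x => by
      rw [Real.norm_of_nonneg (by positivity)]; exact hVlow x)
  have hpμ := hμ.1
  obtain ⟨h0, hsol⟩ := hμtSol
  rcases Nat.eq_zero_or_pos d with rfl | hd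
  · have := hν.1
    have := (hμtPV T hT).1
    simp [kant_eq_zero_of_subsingleton]
  set ρ : ℝ → Measure (Ed d) := fun s => μt (max s 0) with hρ
  have hρ0 : ∀ s, 0 ≤ s → ρ s = μt s := fun s hs => by simp [hρ, hs]
  have hρV : ∀ s, memPV V (ρ s) := fun s => hμtPV _ (le_max_right _ _)
  have hflow : IsFlow m Cb (fun s y => b y (ρ s)) ρ :=
    { one_le := hm
      prob := fun s => (hρV s).1
      meas := fun s => hbBorel _
      grow := fun s x => hbGrow x _ (hρV s)
      congr := fun s t hst => by simp only [hst]
      frozen := fun s hs => by simp [hρ, hs]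
      eqn := fun φ hφ t ht => by
        rw [hρ0 t ht, hρ0 0 le_rfl, h0, hsol φ hφ t ht]
        refine intervalIntegral.integral_congr fun s hs => ?_
        rw [uIcc_of_le ht] at hs
        simp only [hρ0 s hs.1] }
  have := hflow.kant_le hd hC.le hCκ hT (fun s => hpow _ (hρV s))
    (fun s x y => hbMono x y _ (hρV s)) (hbBorel μ) (fun x => hbGrow x μ hμ)
    (fun x y => hbMono x y μ hμ) (hpow μ hμ) hμstat (fun s x => hbLip x _ _ (hρV s) hμ)
  rwa [hρ0 T hT, hρ0 0 le_rfl, h0] at this
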